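/- Let G be a connected graph on n vertices in which every vertex has even degree and whose maximum degree is bounded by a constant Δ, and suppose G is ℓ-good. Then there is a constant B (depending only on Δ) such that for every rule A, the E-process on G has vertex cover time at most B·(n + n·log n/(ℓ·(1−λmax))), where λmax is the eigenvalue parameter of the (lazy) simple random walk on G. -/

import Mathlib

open scoped ENNReal Classical

-- `lambdaMax P` : the largest absolute value of an eigenvalue of `P` other than the
-- eigenvalue `1` (for an ergodic chain on a connected graph, `max(|λ₂|,…,|λₙ|)`).
noncomputable def lambdaMax {V : Type*} [Fintype V] [DecidableEq V] (P : Matrix V V ℝ) : ℝ :=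
  sSup {x : ℝ | ∃ μ ∈ spectrum ℝ P, μ ≠ 1 ∧ x = |μ|}

-- Transition matrix of the lazy simple random walk on `G`.
noncomputable def lazyMatrix {V : Type*} [Fintype V] [DecidableEq V] (G : SimpleGraph V) :
    Matrix V V ℝ :=
  Matrix.of fun u v =>
    (if u = v then (1 : ℝ) / 2 else 0) +
      (if G.Adj u v then 1 / (2 * ((G.neighborSet u).ncard : ℝ)) else 0)

-- The edges traversed by a history `h = [Xₜ, Xₜ₋₁, …, X₀]` (most recent vertex first).
def trav {V : Type*} (h : List V) : List (Sym2 V) :=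
  (h.zip h.tail).map fun p => s(p.1, p.2)

-- One-step transition probabilities of the E-process with edge-selection rule `A`:
-- given the history `v :: h` (current vertex `v`), if some edge of `G` incident with `v`
-- is untraversed, move (deterministically) to the vertex chosen by the rule `A`;
-- otherwise move to a uniformly random neighbour of `v`.
noncomputable def eStep {V : Type*} [Fintype V] (G : SimpleGraph V) (A : List V → V) :
    List V → V → ℝ
  | [], _ => 0
  | (v :: h), x =>
      if ∃ y : V, G.Adj v y ∧ s(v, y) ∉ trav (v :: h) then
        (if x = A (v :: h) then 1 else 0)
      else if G.Adj v x then 1 / ((G.neighborSet v).ncard : ℝ) else 0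

-- A rule is valid if, whenever the current vertex has an untraversed incident edge, it
-- selects a neighbour along such an untraversed edge (its choice may depend arbitrarily,
-- even adversarially, on the entire history).
def ValidRule {V : Type*} (G : SimpleGraph V) (A : List V → V) : Prop :=
  ∀ (v : V) (h : List V), (∃ y : V, G.Adj v y ∧ s(v, y) ∉ trav (v :: h)) →
    G.Adj v (A (v :: h)) ∧ s(v, A (v :: h)) ∉ trav (v :: h)

-- Probability that the E-process started at `u` produces the history `h`
-- (listed most recent vertex first, so the last entry of `h` must be `u`).
noncomputable def trajProb {V : Type*} [Fintype V] (G : SimpleGraph V) (A : List V → V)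
    (u : V) : List V → ℝ
  | [] => 0
  | [x] => if x = u then 1 else 0
  | (x :: y :: h) => eStep G A (y :: h) x * trajProb G A u (y :: h)

-- `uncovProb G A u t` : the probability that the E-process started at `u` has NOT visited
-- every vertex of `G` during steps `0, 1, …, t`.
noncomputable def uncovProb {V : Type*} [Fintype V] (G : SimpleGraph V) (A : List V → V)
    (u : V) (t : ℕ) : ℝ :=
  ∑ f : Fin (t + 1) → V,
    if ∀ x : V, ∃ i, f i = x then 0 else trajProb G A u (List.ofFn f)

-- Expected vertex cover time of the E-process started at `u`,
-- computed as `∑_{t ≥ 0} Pr(cover time > t)`.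
noncomputable def ecoverTime {V : Type*} [Fintype V] (G : SimpleGraph V) (A : List V → V)
    (u : V) : ℝ≥0∞ :=
  ∑' t : ℕ, ENNReal.ofReal (uncovProb G A u t)

-- `G` is `ℓ`-good: for every vertex `v`, every nonempty subgraph of `G` in which every
-- vertex has even degree and which contains all edges of `G` incident with `v` has at
-- least `ℓ` vertices.
def EvenSubgraphGood {V : Type*} [Fintype V] (G : SimpleGraph V) (ℓ : ℕ) : Prop :=
  ∀ (v : V) (H : G.Subgraph), H.verts.Nonempty →
    (∀ e ∈ G.edgeSet, v ∈ e → e ∈ H.edgeSet) →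
    (∀ x : V, Even ((H.neighborSet x).ncard)) →
    ℓ ≤ H.verts.ncard

/-!
Call a step of the process red if it is uniformly random; all other steps traverse a new edge, so
there are at most `m ≤ Δ n` of them. All degrees are even, so every excursion between red steps is a
closed trail: the red steps form a simple random walk, and at each of them the untraversed edges
form an even subgraph. While `v` is unvisited this subgraph contains all edges at `v`, and red steps
are never made from its component of `v`.

It remains to show that the random walk soon hits every such component. Exploring the component from
`v` requires a choice only at vertices of degree at least 4, so after `j ≈ log n` choices it yields
one of `2 ^ (Δ j)` candidate subsets, each of which either is the whole component, with at least `ℓ`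
vertices, or contains `j` vertices of degree at least 4. For both kinds the walk killed on the set
has Dirichlet eigenvalue at least `c ℓ (1 - λmax) / n`. For the second kind this holds because
goodness forces a set of fewer than `ℓ` vertices to have an inner boundary proportional to its
number of vertices of degree at least 4, which controls the low levels of a test function by
coarea, and because `ℓ √(1 - λmax) = O(log n)` by a diameter estimate. A union bound over all
candidates of all vertices then shows that `O(n log n / (ℓ (1 - λmax)))` red steps suffice.
-/

section Energy

variable {V : Type*} [Fintype V]

/-- The Dirichlet energy of `f`, summed over ordered pairs of adjacent vertices, so that every
edge is counted twice. -/
noncomputable def dirichletEnergy (G : SimpleGraph V) (f : V → ℝ) : ℝ :=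
  ∑ x, ∑ y ∈ G.neighborFinset x, (f x - f y) ^ 2

/-- The bilinear form of the adjacency matrix. -/
noncomputable def adjForm (G : SimpleGraph V) (f g : V → ℝ) : ℝ :=
  ∑ x, ∑ y ∈ G.neighborFinset x, f x * g y

/-- The squared norm of `f` in `L²` of the degree measure, which is the unnormalised stationary
distribution of the random walk. -/
noncomputable def degNormSq (G : SimpleGraph V) (f : V → ℝ) : ℝ :=
  ∑ x, (G.degree x : ℝ) * f x ^ 2

variable {G : SimpleGraph V}

theorem sum_sum_neighborFinset_swap (F : V → V → ℝ) :
    ∑ x, ∑ y ∈ G.neighborFinset x, F x y = ∑ x, ∑ y ∈ G.neighborFinset x, F y x :=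
  Finset.sum_comm' fun x y => by simp [G.adj_comm]

theorem sum_sum_neighborFinset_fst (f : V → ℝ) :
    ∑ x, ∑ _y ∈ G.neighborFinset x, f x = ∑ x, (G.degree x : ℝ) * f x := by
  simp

theorem sum_sum_neighborFinset_snd (f : V → ℝ) :
    ∑ x, ∑ y ∈ G.neighborFinset x, f y = ∑ x, (G.degree x : ℝ) * f x := by
  rw [sum_sum_neighborFinset_swap, sum_sum_neighborFinset_fst]

theorem adjForm_comm (f g : V → ℝ) : adjForm G f g = adjForm G g f := by
  simp only [adjForm, mul_comm (f _)]
  exact sum_sum_neighborFinset_swap fun x y => g y * f x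

theorem dirichletEnergy_nonneg (f : V → ℝ) : 0 ≤ dirichletEnergy G f :=
  Finset.sum_nonneg fun _ _ => Finset.sum_nonneg fun _ _ => sq_nonneg _

theorem degNormSq_nonneg (f : V → ℝ) : 0 ≤ degNormSq G f :=
  Finset.sum_nonneg fun _ _ => by positivity

theorem degNormSq_pos (hdeg : ∀ x, 0 < G.degree x) {f : V → ℝ} (hf : f ≠ 0) :
    0 < degNormSq G f := by
  obtain ⟨x, hx⟩ := Function.ne_iff.1 hf
  refine Finset.sum_pos' (fun _ _ => by positivity) ⟨x, Finset.mem_univ _, ?_⟩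
  have := hdeg x
  have : f x ≠ 0 := hx
  positivity

theorem dirichletEnergy_eq (f : V → ℝ) :
    dirichletEnergy G f = 2 * degNormSq G f - 2 * adjForm G f f := by
  have expand : dirichletEnergy G f = ∑ x, ∑ y ∈ G.neighborFinset x, f x ^ 2
      + ∑ x, ∑ y ∈ G.neighborFinset x, f y ^ 2 - 2 * adjForm G f f := by
    simp only [dirichletEnergy, adjForm, Finset.mul_sum, ← Finset.sum_add_distrib,
      ← Finset.sum_sub_distrib]
    exact Finset.sum_congr rfl fun x _ => Finset.sum_congr rfl fun y _ => by ring
  rw [expand, sum_sum_neighborFinset_fst (fun x => f x ^ 2),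
    sum_sum_neighborFinset_snd (fun x => f x ^ 2), degNormSq]
  ring

theorem dirichletEnergy_le (f : V → ℝ) : dirichletEnergy G f ≤ 4 * degNormSq G f := by
  calc dirichletEnergy G f
      ≤ ∑ x, ∑ y ∈ G.neighborFinset x, (2 * f x ^ 2 + 2 * f y ^ 2) :=
        Finset.sum_le_sum fun x _ => Finset.sum_le_sum fun y _ => by
          nlinarith [sq_nonneg (f x + f y)]
    _ = 4 * degNormSq G f := by
        simp only [Finset.sum_add_distrib, ← Finset.mul_sum]
        rw [sum_sum_neighborFinset_fst (fun x => f x ^ 2),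
          sum_sum_neighborFinset_snd (fun x => f x ^ 2), degNormSq]
        ring

theorem sq_sub_le_dirichletEnergy {x y : V} (h : G.Adj x y) (f : V → ℝ) :
    (f x - f y) ^ 2 ≤ dirichletEnergy G f :=
  (Finset.single_le_sum (f := fun y => (f x - f y) ^ 2) (fun _ _ => sq_nonneg _)
    (by simpa using h)).trans
    (Finset.single_le_sum (f := fun x => ∑ y ∈ G.neighborFinset x, (f x - f y) ^ 2)
      (fun _ _ => Finset.sum_nonneg fun _ _ => sq_nonneg _) (Finset.mem_univ x))

theorem eq_of_dirichletEnergy_eq_zero (hG : G.Connected) {f : V → ℝ}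
    (h : dirichletEnergy G f = 0) (x y : V) : f x = f y := by
  obtain ⟨w⟩ := hG.preconnected x y
  induction w with
  | nil => rfl
  | cons hab _ ih =>
    have := (sq_sub_le_dirichletEnergy hab f).trans h.le
    exact (sub_eq_zero.1 (pow_eq_zero_iff two_ne_zero |>.1
      (this.antisymm (sq_nonneg _)))).trans ih

/-- `δ` is a lower bound in `(0, 1]` for the spectral gap of the walk on `G`, expressed by its
Poincaré inequality. -/
structure IsSpectralGap (G : SimpleGraph V) (δ : ℝ) : Prop where
  pos : 0 < δ
  le_one : δ ≤ 1
  poincare : ∀ f : V → ℝ, ∑ x, (G.degree x : ℝ) * f x = 0 →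
    δ * degNormSq G f ≤ dirichletEnergy G f

theorem ncard_neighborSet (x : V) : (G.neighborSet x).ncard = G.degree x := by
  rw [← G.card_neighborSet_eq_degree, Set.ncard_eq_toFinset_card', Set.toFinset_card]

end Energy

section SpectralGap

open Matrix

variable {V : Type*} [Fintype V]

theorem dotProduct_mulVec_le_of_isHermitian {A : Matrix V V ℝ} (hA : A.IsHermitian) {Λ : ℝ}
    {v : V → ℝ} (hv : ∀ μ w, Λ < μ → A *ᵥ w = μ • w → w ⬝ᵥ v = 0) :
    v ⬝ᵥ A *ᵥ v ≤ Λ * (v ⬝ᵥ v) := by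
  set b := hA.eigenvectorBasis
  set coord : V → ℝ := fun i => b i ⬝ᵥ v
  have parseval (u : V → ℝ) : v ⬝ᵥ u = ∑ i, coord i * (b i ⬝ᵥ u) := by
    have := b.sum_inner_mul_inner (WithLp.toLp 2 v) (WithLp.toLp 2 u)
    simpa [EuclideanSpace.inner_eq_star_dotProduct, dotProduct_comm, coord] using this.symm
  have coord_mulVec (i : V) : b i ⬝ᵥ A *ᵥ v = hA.eigenvalues i * coord i := by
    rw [dotProduct_mulVec, ← mulVec_transpose, ← conjTranspose_eq_transpose_of_trivial, hA,
      hA.mulVec_eigenvectorBasis, smul_dotProduct, smul_eq_mul]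
  simp only [parseval, coord_mulVec, Finset.mul_sum]
  refine Finset.sum_le_sum fun i _ => ?_
  rcases lt_or_ge Λ (hA.eigenvalues i) with hi | hi
  · have : coord i = 0 := hv _ _ hi (hA.mulVec_eigenvectorBasis i)
    simp [this]
  · nlinarith [mul_self_nonneg (coord i)]

-- Detailed balance makes `P` self-adjoint in the weighted inner product: conjugating by the
-- square roots of the weights gives a Hermitian matrix.
theorem sum_mul_mulVec_le_of_detailedBalance {P : Matrix V V ℝ} {w : V → ℝ} (hw : ∀ x, 0 < w x)
    (hP : ∀ x y, w x * P x y = w y * P y x) {Λ : ℝ} {f : V → ℝ}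
    (hf : ∀ μ k, Λ < μ → P *ᵥ k = μ • k → ∑ x, w x * (k x * f x) = 0) :
    ∑ x, w x * (f x * (P *ᵥ f) x) ≤ Λ * ∑ x, w x * f x ^ 2 := by
  set s : V → ℝ := fun x => √(w x)
  have hs (x : V) : s x ≠ 0 := (Real.sqrt_pos.2 (hw x)).ne'
  have hss (x : V) : s x * s x = w x := Real.mul_self_sqrt (hw x).le
  set A : Matrix V V ℝ := Matrix.of fun x y => s x * P x y / s y
  have hA : A.IsHermitian := by
    ext x y
    have := hP x y
    simp only [← hss] at this
    have hx := hs x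
    have hy := hs y
    simp only [A, conjTranspose_apply, of_apply, star_trivial]
    field_simp
    linear_combination -this
  have mulVec_conj (k : V → ℝ) : A *ᵥ (s * k) = s * P *ᵥ k := by
    ext x
    simp only [A, mulVec, dotProduct, of_apply, Pi.mul_apply, Finset.mul_sum]
    refine Finset.sum_congr rfl fun y _ => ?_
    have := hs y
    field_simp
  have dot_conj (k g : V → ℝ) : (s * k) ⬝ᵥ (s * g) = ∑ x, w x * (k x * g x) :=
    Finset.sum_congr rfl fun x _ => by rw [Pi.mul_apply, Pi.mul_apply, ← hss]; ring
  have bound := dotProduct_mulVec_le_of_isHermitian hA (Λ := Λ) (v := s * f) fun μ u hμ hu => by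
    obtain ⟨k, rfl⟩ : ∃ k, u = s * k :=
      ⟨fun x => u x / s x, funext fun x => (mul_div_cancel₀ _ (hs x)).symm⟩
    rw [dot_conj]
    refine hf μ k hμ (funext fun x => mul_left_cancel₀ (hs x) ?_)
    have := congrFun ((mulVec_conj k).symm.trans hu) x
    simp only [Pi.mul_apply, Pi.smul_apply, smul_eq_mul] at this ⊢
    linear_combination this
  simpa only [mulVec_conj, dot_conj, ← sq] using bound

variable [DecidableEq V]

theorem mem_spectrum_iff_exists_mulVec_eq {P : Matrix V V ℝ} {μ : ℝ} :
    μ ∈ spectrum ℝ P ↔ ∃ f : V → ℝ, f ≠ 0 ∧ P *ᵥ f = μ • f := by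
  rw [← Matrix.spectrum_toLin', ← Module.End.hasEigenvalue_iff_mem_spectrum]
  constructor
  · intro h
    obtain ⟨f, hf⟩ := h.exists_hasEigenvector
    exact ⟨f, hf.2, by simpa using hf.apply_eq_smul⟩
  · rintro ⟨f, hf, he⟩
    exact Module.End.hasEigenvalue_of_hasEigenvector
      (x := f) ⟨Module.End.mem_eigenspace_iff.2 (by simpa using he), hf⟩

variable {G : SimpleGraph V}

theorem degree_mul_lazyMatrix_mulVec (hdeg : ∀ x, 0 < G.degree x) (f : V → ℝ) (x : V) :
    (G.degree x : ℝ) * (lazyMatrix G *ᵥ f) x =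
      (G.degree x * f x + ∑ y ∈ G.neighborFinset x, f y) / 2 := by
  have hx : (G.degree x : ℝ) ≠ 0 := by exact_mod_cast (hdeg x).ne'
  have : (lazyMatrix G *ᵥ f) x =
      f x / 2 + 1 / (2 * (G.degree x : ℝ)) * ∑ y ∈ G.neighborFinset x, f y := by
    simp [mulVec, dotProduct, lazyMatrix, add_mul, Finset.sum_add_distrib, ncard_neighborSet,
      Finset.mul_sum, SimpleGraph.neighborFinset_eq_filter, Finset.sum_filter, div_eq_inv_mul]
  rw [this]
  field_simp

theorem lazyMatrix_detailedBalance (hdeg : ∀ x, 0 < G.degree x) (x y : V) :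
    (G.degree x : ℝ) * lazyMatrix G x y = G.degree y * lazyMatrix G y x := by
  have hx : (G.degree x : ℝ) ≠ 0 := by exact_mod_cast (hdeg x).ne'
  have hy : (G.degree y : ℝ) ≠ 0 := by exact_mod_cast (hdeg y).ne'
  rcases eq_or_ne x y with rfl | hxy
  · rfl
  · simp only [lazyMatrix, of_apply, ncard_neighborSet, hxy, hxy.symm, if_false, zero_add,
      G.adj_comm y x]
    split_ifs
    · field_simp
    · simp

theorem sum_degree_mul_lazyMatrix_mulVec (hdeg : ∀ x, 0 < G.degree x) (f : V → ℝ) :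
    ∑ x, (G.degree x : ℝ) * (f x * (lazyMatrix G *ᵥ f) x) =
      degNormSq G f - dirichletEnergy G f / 4 := by
  have (x : V) : (G.degree x : ℝ) * (f x * (lazyMatrix G *ᵥ f) x) =
      (G.degree x * f x ^ 2 + ∑ y ∈ G.neighborFinset x, f x * f y) / 2 := by
    rw [← Finset.mul_sum]
    linear_combination f x * degree_mul_lazyMatrix_mulVec hdeg f x
  simp only [this]
  rw [← Finset.sum_div, Finset.sum_add_distrib, dirichletEnergy_eq, degNormSq, adjForm]
  ring

theorem dirichletEnergy_of_lazyMatrix_mulVec_eq (hdeg : ∀ x, 0 < G.degree x) {μ : ℝ} {f : V → ℝ}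
    (h : lazyMatrix G *ᵥ f = μ • f) :
    dirichletEnergy G f = 4 * (1 - μ) * degNormSq G f := by
  have := sum_degree_mul_lazyMatrix_mulVec hdeg f
  have eig : ∑ x, (G.degree x : ℝ) * (f x * (lazyMatrix G *ᵥ f) x) = μ * degNormSq G f := by
    rw [h, degNormSq, Finset.mul_sum]
    exact Finset.sum_congr rfl fun x _ => by simp only [Pi.smul_apply, smul_eq_mul]; ring
  linarith

theorem mem_Icc_of_mem_spectrum_lazyMatrix (hdeg : ∀ x, 0 < G.degree x) {μ : ℝ}
    (h : μ ∈ spectrum ℝ (lazyMatrix G)) : μ ∈ Set.Icc 0 1 := by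
  obtain ⟨f, hf, he⟩ := mem_spectrum_iff_exists_mulVec_eq.1 h
  have energy_eq := dirichletEnergy_of_lazyMatrix_mulVec_eq hdeg he
  have norm_pos := degNormSq_pos hdeg hf
  have energy_le := dirichletEnergy_le (G := G) f
  have energy_nonneg := dirichletEnergy_nonneg (G := G) f
  constructor <;> by_contra! hμ <;> nlinarith

theorem finite_abs_spectrum_ne_one (P : Matrix V V ℝ) :
    {x : ℝ | ∃ μ ∈ spectrum ℝ P, μ ≠ 1 ∧ x = |μ|}.Finite := by
  refine ((Matrix.finite_real_spectrum (A := P)).image (fun μ => |μ|)).subset ?_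
  rintro x ⟨μ, h, _, rfl⟩
  exact ⟨μ, h, rfl⟩

theorem lambdaMax_nonneg (P : Matrix V V ℝ) : 0 ≤ lambdaMax P := by
  apply Real.sSup_nonneg
  rintro x ⟨μ, _, _, rfl⟩
  exact abs_nonneg _

theorem le_lambdaMax {P : Matrix V V ℝ} {μ : ℝ} (h : μ ∈ spectrum ℝ P) (hμ : μ ≠ 1) :
    μ ≤ lambdaMax P :=
  (le_abs_self μ).trans (le_csSup (finite_abs_spectrum_ne_one P).bddAbove ⟨μ, h, hμ, rfl⟩)

theorem lambdaMax_lazyMatrix_lt_one (hdeg : ∀ x, 0 < G.degree x) :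
    lambdaMax (lazyMatrix G) < 1 := by
  rcases Set.eq_empty_or_nonempty
    {x : ℝ | ∃ μ ∈ spectrum ℝ (lazyMatrix G), μ ≠ 1 ∧ x = |μ|} with h | h
  · simp [lambdaMax, h]
  · obtain ⟨μ, hmem, hne, hμ⟩ := h.csSup_mem (finite_abs_spectrum_ne_one _)
    obtain ⟨h0, h1⟩ := mem_Icc_of_mem_spectrum_lazyMatrix hdeg hmem
    rw [lambdaMax, hμ, abs_of_nonneg h0]
    exact lt_of_le_of_ne h1 hne

theorem isSpectralGap_one_sub_lambdaMax (hG : G.Connected) (hdeg : ∀ x, 0 < G.degree x) :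
    IsSpectralGap G (1 - lambdaMax (lazyMatrix G)) where
  pos := sub_pos.2 (lambdaMax_lazyMatrix_lt_one hdeg)
  le_one := sub_le_self _ (lambdaMax_nonneg _)
  poincare f hf := by
    have quadratic_le := sum_mul_mulVec_le_of_detailedBalance (P := lazyMatrix G)
      (w := fun x => (G.degree x : ℝ)) (Λ := lambdaMax (lazyMatrix G)) (f := f)
      (fun x => by exact_mod_cast hdeg x) (lazyMatrix_detailedBalance hdeg) fun μ k hμ hk => by
        rcases eq_or_ne k 0 with rfl | hk0
        · simp
        have hμ1 : μ = 1 := by_contra fun hne => hμ.not_ge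
          (le_lambdaMax (mem_spectrum_iff_exists_mulVec_eq.2 ⟨k, hk0, hk⟩) hne)
        have energy_zero : dirichletEnergy G k = 0 := by
          rw [dirichletEnergy_of_lazyMatrix_mulVec_eq hdeg hk, hμ1]; ring
        obtain ⟨x₀⟩ := hG.nonempty
        have hconst (x : V) : k x = k x₀ := eq_of_dirichletEnergy_eq_zero hG energy_zero x x₀
        simp only [hconst, mul_left_comm _ (k x₀), ← Finset.mul_sum, hf, mul_zero]
    rw [sum_degree_mul_lazyMatrix_mulVec hdeg, ← degNormSq] at quadratic_le
    have := dirichletEnergy_nonneg (G := G) f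
    linarith

end SpectralGap

section EvenSubgraphs

open scoped symmDiff

variable {V : Type*}

theorem symmDiff_adj_iff (J K : SimpleGraph V) (a b : V) :
    (J ∆ K).Adj a b ↔ Xor (J.Adj a b) (K.Adj a b) := Iff.rfl

variable [Fintype V]

/-- The degree modulo 2: the boundary of the edge set of `J` as a chain over `ZMod 2`. -/
noncomputable def degreeParity (J : SimpleGraph V) (a : V) : ZMod 2 := J.degree a

theorem degreeParity_eq_zero_iff {J : SimpleGraph V} {a : V} [Fintype (J.neighborSet a)] :
    degreeParity J a = 0 ↔ Even (J.degree a) := by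
  rw [degreeParity, ZMod.natCast_eq_zero_iff_even]
  exact iff_of_eq (congrArg Even (by congr!))

theorem degreeParity_eq_sum (J : SimpleGraph V) (a : V) :
    degreeParity J a = ∑ b, if J.Adj a b then 1 else 0 := by
  rw [degreeParity, Finset.sum_boole, ← SimpleGraph.neighborFinset_eq_filter,
    J.card_neighborFinset_eq_degree]

theorem degreeParity_bot (a : V) : degreeParity (⊥ : SimpleGraph V) a = 0 := by
  simp [degreeParity_eq_sum]

theorem degreeParity_symmDiff (J K : SimpleGraph V) (a : V) :
    degreeParity (J ∆ K) a = degreeParity J a + degreeParity K a := by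
  simp only [degreeParity_eq_sum, ← Finset.sum_add_distrib, symmDiff_adj_iff]
  refine Finset.sum_congr rfl fun b _ => ?_
  by_cases hJ : J.Adj a b <;> by_cases hK : K.Adj a b <;>
    simp [hJ, hK, CharTwo.add_self_eq_zero]

theorem degreeParity_edge {p q : V} (hpq : p ≠ q) (a : V) :
    degreeParity (SimpleGraph.edge p q) a =
      (if a = p then 1 else 0) + (if a = q then 1 else 0) := by
  calc degreeParity (SimpleGraph.edge p q) a
      = ∑ b, ((if a = p then if b = q then 1 else 0 else 0) +
          (if a = q then if b = p then 1 else 0 else 0)) := by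
        rw [degreeParity_eq_sum]
        exact Finset.sum_congr rfl fun b _ => by grind
    _ = _ := by
        rw [Finset.sum_add_distrib]
        split_ifs <;> simp

theorem exists_le_degreeParity_endpoints {K : SimpleGraph V} {r p : V} (h : K.Reachable r p) :
    ∃ J ≤ K, ∀ a, degreeParity J a = (if a = r then 1 else 0) + (if a = p then 1 else 0) := by
  obtain ⟨w⟩ := h
  induction w with
  | nil => exact ⟨⊥, bot_le, fun a => by
    simp [degreeParity_bot, CharTwo.add_self_eq_zero]⟩
  | @cons r q p hrq _ ih =>
    obtain ⟨J, hJ, hodd⟩ := ih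
    refine ⟨J ∆ SimpleGraph.edge r q, symmDiff_le_sup.trans
      (sup_le hJ ((SimpleGraph.edge_le_iff _).2 (Or.inr hrq))), fun a => ?_⟩
    rw [degreeParity_symmDiff, hodd, degreeParity_edge hrq.ne]
    linear_combination CharTwo.add_self_eq_zero (if a = q then (1 : ZMod 2) else 0)

-- The paths to the root `r` are added modulo 2; their contributions at `r` cancel.
theorem exists_le_degreeParity_mem {K : SimpleGraph V} {r : V} {T : Finset V} (hT : Even T.card)
    (hr : ∀ p ∈ T, K.Reachable r p) :
    ∃ J ≤ K, ∀ a, degreeParity J a = if a ∈ T then 1 else 0 := by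
  suffices ∃ J ≤ K, ∀ a, degreeParity J a =
      T.card * (if a = r then 1 else 0) + if a ∈ T then 1 else 0 by
    simpa [(ZMod.natCast_eq_zero_iff_even).2 hT] using this
  clear hT
  induction T using Finset.induction_on with
  | empty => exact ⟨⊥, bot_le, fun a => by simp [degreeParity_bot]⟩
  | insert p T hp ih =>
    obtain ⟨J, hJ, hodd⟩ := ih fun q hq => hr q (Finset.mem_insert_of_mem hq)
    obtain ⟨L, hL, hodd'⟩ := exists_le_degreeParity_endpoints (hr p (Finset.mem_insert_self p T))
    refine ⟨J ∆ L, symmDiff_le_sup.trans (sup_le hJ hL), fun a => ?_⟩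
    rw [degreeParity_symmDiff, hodd, hodd', Finset.card_insert_of_notMem hp]
    have : (if a ∈ insert p T then (1 : ZMod 2) else 0) =
        (if a ∈ T then 1 else 0) + if a = p then 1 else 0 := by
      rcases eq_or_ne a p with rfl | hap <;> simp [*]
    rw [this]
    push_cast
    ring

variable {G : SimpleGraph V} {ℓ : ℕ}

theorem le_card_of_even_degree (hgood : EvenSubgraphGood G ℓ) {H : SimpleGraph V} (hle : H ≤ G)
    (heven : ∀ a, Even (H.degree a)) {x : V} (hx : ∀ y, G.Adj x y → H.Adj x y)
    {X : Finset V} (hxX : x ∈ X) (hX : ∀ a b, H.Adj a b → a ∈ X) : ℓ ≤ X.card := by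
  let H' : G.Subgraph :=
    { verts := X
      Adj := H.Adj
      adj_sub := fun h => hle h
      edge_vert := fun {a b} h => hX a b h
      symm := H.symm }
  have := hgood x H' ⟨x, hxX⟩ (fun e he hxe => by
    obtain ⟨y, rfl⟩ := hxe
    exact hx y he) fun a => by
      have := heven a
      rwa [← ncard_neighborSet] at this
  simpa [H'] using this

theorem degreeParity_sdiff_deleteIncidenceSet (heven : ∀ a, Even (G.degree a)) (x a : V) :
    degreeParity (G \ G.deleteIncidenceSet x) a = if G.Adj x a then 1 else 0 := by
  rw [degreeParity_eq_sum]
  simp only [SimpleGraph.sdiff_adj, SimpleGraph.deleteIncidenceSet_adj]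
  rcases eq_or_ne a x with rfl | hax
  · have := degreeParity_eq_zero_iff.2 (heven a)
    rw [degreeParity_eq_sum] at this
    simpa using this
  · have (b : V) : (G.Adj a b ∧ ¬ (G.Adj a b ∧ a ≠ x ∧ b ≠ x)) ↔ b = x ∧ G.Adj x a := by
      rw [G.adj_comm x a]
      constructor
      · rintro ⟨h1, h2⟩
        have : b = x := by_contra fun h => h2 ⟨h1, hax, h⟩
        exact ⟨this, this ▸ h1⟩
      · rintro ⟨rfl, h⟩
        exact ⟨h, fun h' => h'.2.2 rfl⟩
    simp only [this]
    by_cases h : G.Adj x a <;> simp [h]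

theorem le_card_of_neighbors_reachable (hgood : EvenSubgraphGood G ℓ)
    (heven : ∀ a, Even (G.degree a)) {X : Finset V} {x r : V} (hxX : x ∈ X)
    (hnX : ∀ y, G.Adj x y → y ∈ X) {K : SimpleGraph V} (hKG : K ≤ G)
    (hKX : ∀ a b, K.Adj a b → a ∈ X ∧ a ≠ x) (hr : ∀ y, G.Adj x y → K.Reachable r y) :
    ℓ ≤ X.card := by
  obtain ⟨J, hJK, hJ⟩ := exists_le_degreeParity_mem (T := G.neighborFinset x)
    (by simpa using heven x) (by simpa using hr)
  set star := G \ G.deleteIncidenceSet x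
  have hJx (y : V) : ¬ J.Adj x y := fun h => (hKX x y (hJK h)).2 rfl
  refine le_card_of_even_degree hgood (H := J ∆ star) (x := x)
    (symmDiff_le_sup.trans (sup_le (hJK.trans hKG) sdiff_le)) (fun a => ?_) (fun y hy => ?_) hxX
    fun a b hab => ?_
  · rw [← degreeParity_eq_zero_iff, degreeParity_symmDiff, hJ,
      degreeParity_sdiff_deleteIncidenceSet heven]
    simp [CharTwo.add_self_eq_zero]
  · exact Or.inr ⟨⟨hy, by simp [SimpleGraph.deleteIncidenceSet_adj]⟩, hJx y⟩
  · rcases hab with ⟨h, -⟩ | ⟨⟨hG, hdel⟩, -⟩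
    · exact (hKX a b (hJK h)).1
    · rcases eq_or_ne a x with rfl | ha
      · exact hxX
      · have hb : b = x := by_contra fun hb =>
          hdel (SimpleGraph.deleteIncidenceSet_adj.2 ⟨hG, ha, hb⟩)
        exact hnX a (hb ▸ hG.symm)

end EvenSubgraphs

section Nonseparating

variable {U : Type*}

theorem exists_adj_deleteIncidenceSet_reachable {Γ : SimpleGraph U} {x z : U}
    (h : Γ.Reachable x z) (hne : x ≠ z) :
    ∃ p, Γ.Adj x p ∧ (Γ.deleteIncidenceSet x).Reachable p z := by
  obtain ⟨w, hw⟩ := h.exists_isPath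
  cases w with
  | nil => exact absurd rfl hne
  | @cons _ p _ hxp w =>
    have hx : x ∉ w.support := ((SimpleGraph.Walk.cons_isPath_iff _ _).1 hw).2
    refine ⟨p, hxp, ⟨w.transfer _ fun e he => ?_⟩⟩
    induction e with
    | _ a b =>
      exact SimpleGraph.deleteIncidenceSet_adj.2 ⟨w.adj_of_mem_edges he,
        fun h => hx (h ▸ w.fst_mem_support_of_mem_edges he),
        fun h => hx (h ▸ w.snd_mem_support_of_mem_edges he)⟩

theorem deleteIncidenceSet_mono {F Γ : SimpleGraph U} (h : F ≤ Γ) (x : U) :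
    F.deleteIncidenceSet x ≤ Γ.deleteIncidenceSet x := fun a b hab => by
  rw [SimpleGraph.deleteIncidenceSet_adj] at hab ⊢
  exact ⟨h hab.1, hab.2⟩

/-- `x` does not separate its neighbours: they all lie in one component of `Γ - x`. -/
def IsNonseparating (Γ : SimpleGraph U) (x : U) : Prop :=
  ∃ r, ∀ y, Γ.Adj x y → (Γ.deleteIncidenceSet x).Reachable r y

theorem exists_adj_forest_reachable {F Γ : SimpleGraph U} (hF : F.Reachable = Γ.Reachable)
    {x z : U} (h : Γ.Adj x z) : ∃ p, F.Adj x p ∧ (F.deleteIncidenceSet x).Reachable p z :=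
  exists_adj_deleteIncidenceSet_reachable (hF ▸ h.reachable) h.ne

theorem isNonseparating_of_forest_neighbors {F Γ : SimpleGraph U} (hle : F ≤ Γ)
    (hF : F.Reachable = Γ.Reachable) {x r : U}
    (hr : ∀ p, F.Adj x p → (Γ.deleteIncidenceSet x).Reachable r p) : IsNonseparating Γ x :=
  ⟨r, fun _ hy => by
    obtain ⟨p, hp, hpy⟩ := exists_adj_forest_reachable hF hy
    exact (hr p hp).trans (hpy.mono (deleteIncidenceSet_mono hle x))⟩

variable [Fintype U]

theorem sum_degree_le_of_isAcyclic {F : SimpleGraph U} (hF : F.IsAcyclic) :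
    ∑ x, F.degree x ≤ 2 * Fintype.card U := by
  rcases isEmpty_or_nonempty U with h | h
  · simp
  · obtain ⟨T, hFT, -, hT⟩ :=
      SimpleGraph.connected_top.exists_isTree_le_of_le_of_isAcyclic le_top hF
    calc ∑ x, F.degree x ≤ ∑ x, T.degree x :=
          Finset.sum_le_sum fun x _ => SimpleGraph.degree_le_of_le hFT
      _ = 2 * T.edgeFinset.card := T.sum_degrees_eq_twice_card_edges
      _ ≤ 2 * Fintype.card U := by have := hT.card_edgeFinset; omega

section SpanningForest

variable {F Γ : SimpleGraph U} {x : U}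

theorem two_le_degree_of_not_isNonseparating (hle : F ≤ Γ) (hF : F.Reachable = Γ.Reachable)
    (hx : ¬ IsNonseparating Γ x) : 2 ≤ F.degree x := by
  by_contra! hlt
  have hone : (F.neighborFinset x).card ≤ 1 := by
    rw [F.card_neighborFinset_eq_degree]; omega
  rw [Finset.card_le_one] at hone
  obtain ⟨r, hr⟩ : ∃ r, ∀ p, F.Adj x p → p = r := by
    rcases (F.neighborFinset x).eq_empty_or_nonempty with h0 | ⟨r, hr⟩
    · exact ⟨x, fun p hp => by simp [← SimpleGraph.mem_neighborFinset, h0] at hp⟩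
    · exact ⟨r, fun p hp => hone p (by simpa using hp) r hr⟩
  exact hx (isNonseparating_of_forest_neighbors hle hF (r := r) fun p hp => by rw [hr p hp])

theorem not_reachable_of_degree_eq_two (hle : F ≤ Γ) (hF : F.Reachable = Γ.Reachable)
    (hx : ¬ IsNonseparating Γ x) (hdeg : F.degree x ≤ 2) {p q : U} (hp : F.Adj x p)
    (hq : F.Adj x q) (hpq : p ≠ q) : ¬ (Γ.deleteIncidenceSet x).Reachable p q := by
  intro hreach
  have hpair : {p, q} = F.neighborFinset x := by
    apply Finset.eq_of_subset_of_card_le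
    · simp [Finset.insert_subset_iff, hp, hq]
    · rwa [Finset.card_pair hpq, F.card_neighborFinset_eq_degree]
  refine hx (isNonseparating_of_forest_neighbors hle hF (r := p) fun y hy => ?_)
  rw [← SimpleGraph.mem_neighborFinset, ← hpair, Finset.mem_insert, Finset.mem_singleton] at hy
  rcases hy with rfl | rfl
  exacts [.rfl, hreach]

-- An edge of `Γ` outside the forest closes a cycle through `x`; the forest neighbour `p` of `x` on
-- it does not separate its two neighbours on that cycle, hence is special.
theorem exists_adj_nonseparating_or_branching (hle : F ≤ Γ) (hF : F.Reachable = Γ.Reachable)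
    (hx : F.degree x < Γ.degree x) :
    ∃ p, Γ.Adj p x ∧ (IsNonseparating Γ p ∨ 3 ≤ F.degree p) := by
  obtain ⟨z, hz, hzF⟩ : ∃ z ∈ Γ.neighborFinset x, z ∉ F.neighborFinset x := by
    apply Finset.exists_mem_notMem_of_card_lt_card
    simpa using hx
  rw [SimpleGraph.mem_neighborFinset] at hz hzF
  obtain ⟨p, hxp, hpz⟩ := exists_adj_forest_reachable hF hz
  refine ⟨p, (hle hxp).symm, ?_⟩
  by_contra! hp
  have hne : p ≠ z := by rintro rfl; exact hzF hxp
  obtain ⟨q, hpq, hqz⟩ := exists_adj_deleteIncidenceSet_reachable hpz hne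
  rw [SimpleGraph.deleteIncidenceSet_adj] at hpq
  refine not_reachable_of_degree_eq_two hle hF hp.1 (by omega) hxp.symm hpq.1 hpq.2.2.symm ?_
  have hxz : (Γ.deleteIncidenceSet p).Adj x z :=
    SimpleGraph.deleteIncidenceSet_adj.2 ⟨hz, hxp.ne, hne.symm⟩
  exact hxz.reachable.trans (hqz.mono (deleteIncidenceSet_mono
    ((F.deleteIncidenceSet_le x).trans hle) p)).symm

theorem card_special_le (hle : F ≤ Γ) (hF : F.Reachable = Γ.Reachable) (hFac : F.IsAcyclic)
    {B : Finset U} (hB : ∀ x ∉ B, ¬ IsNonseparating Γ x) :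
    (Finset.univ.filter fun x => x ∈ B ∨ 3 ≤ F.degree x).card ≤ 3 * B.card := by
  set S := Finset.univ.filter fun x => x ∈ B ∨ 3 ≤ F.degree x
  have pointwise (x : U) :
      (if x ∈ S then 1 else 0) + 2 ≤ F.degree x + (if x ∈ B then 3 else 0) := by
    have hS : x ∈ S ↔ x ∈ B ∨ 3 ≤ F.degree x := by simp [S]
    by_cases hb : x ∈ B
    · simp [hS, hb]
    · have := two_le_degree_of_not_isNonseparating hle hF (hB x hb)
      simp only [hS, hb, false_or, if_false]
      split_ifs <;> omega
  have total := Finset.sum_le_sum (s := Finset.univ) fun x _ => pointwise x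
  simp only [Finset.sum_add_distrib, Finset.sum_ite_mem, Finset.univ_inter, Finset.sum_const,
    smul_eq_mul, Finset.card_univ] at total
  have := sum_degree_le_of_isAcyclic hFac
  omega

end SpanningForest

theorem card_three_le_degree_le {Γ : SimpleGraph U} {B : Finset U} {Δ : ℕ}
    (hΔ : ∀ x, Γ.degree x ≤ Δ) (hB : ∀ x ∉ B, ¬ IsNonseparating Γ x) :
    (Finset.univ.filter fun x => x ∈ B ∨ 3 ≤ Γ.degree x).card ≤ 3 * (Δ + 1) * B.card := by
  obtain ⟨F, hle, hFac, hF⟩ := SimpleGraph.exists_isAcyclic_reachable_eq_le (G := Γ)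
  set S := Finset.univ.filter fun x => x ∈ B ∨ 3 ≤ F.degree x
  have covered : (Finset.univ.filter fun x => x ∈ B ∨ 3 ≤ Γ.degree x) ⊆
      S.biUnion fun p => insert p (Γ.neighborFinset p) := by
    intro x hx
    rw [Finset.mem_biUnion]
    by_cases hxS : x ∈ S
    · exact ⟨x, hxS, Finset.mem_insert_self _ _⟩
    · simp only [S, Finset.mem_filter, Finset.mem_univ, true_and, not_or, not_le] at hx hxS
      obtain ⟨p, hpx, hp⟩ := exists_adj_nonseparating_or_branching hle hF (x := x)
        (by have := hx.resolve_left hxS.1; omega)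
      refine ⟨p, ?_, by simp [hpx]⟩
      simpa [S] using hp.imp_left fun h => by_contra fun hpB => hB p hpB h
  calc _ ≤ _ := Finset.card_le_card covered
    _ ≤ S.card * (Δ + 1) := Finset.card_biUnion_le_card_mul _ _ _ fun p _ =>
        (Finset.card_insert_le _ _).trans (Nat.add_le_add_right (by simpa using hΔ p) 1)
    _ ≤ 3 * B.card * (Δ + 1) := Nat.mul_le_mul_right _ (card_special_le hle hF hFac hB)
    _ = _ := by ring

end Nonseparating

section Isoperimetry

variable {V : Type*} [Fintype V]

/-- The vertices of `X` with a neighbour outside `X`. -/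
noncomputable def innerBoundary (G : SimpleGraph V) (X : Finset V) : Finset V :=
  X.filter fun x => ∃ y, y ∉ X ∧ G.Adj x y

variable {G : SimpleGraph V} {X : Finset V} {x : V} {ℓ : ℕ}

theorem neighborSet_subset_of_notMem_innerBoundary (hx : x ∈ X) (hb : x ∉ innerBoundary G X) :
    G.neighborSet x ⊆ X := fun y hy =>
  by_contra fun hyX => hb (Finset.mem_filter.2 ⟨hx, y, hyX, hy⟩)

theorem degree_comap_val (G : SimpleGraph V) (x : X) :
    (G.comap ((↑) : X → V)).degree x = (G.neighborFinset x ∩ X).card := by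
  rw [← SimpleGraph.card_neighborFinset_eq_degree,
    ← Finset.card_map (Function.Embedding.subtype (· ∈ X))]
  congr 1
  ext y
  simp

-- Otherwise an even subgraph with all its vertices in `X` would contain every edge at `x`.
theorem not_isNonseparating_comap_val (hgood : EvenSubgraphGood G ℓ)
    (heven : ∀ x, Even (G.degree x)) (hX : X.card < ℓ) {x : X} (hx : (x : V) ∉ innerBoundary G X) :
    ¬ IsNonseparating (G.comap ((↑) : X → V)) x := by
  rintro ⟨r, hr⟩
  have hnX := neighborSet_subset_of_notMem_innerBoundary x.2 hx
  set K := ((G.comap ((↑) : X → V)).deleteIncidenceSet x).map (Function.Embedding.subtype (· ∈ X))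
  have hK {a b : V} (h : K.Adj a b) : G.Adj a b ∧ a ∈ X ∧ a ≠ x := by
    obtain ⟨-, a, b, hab, rfl, rfl⟩ := h
    rw [SimpleGraph.deleteIncidenceSet_adj] at hab
    exact ⟨hab.1, a.2, fun h => hab.2.1 (Subtype.ext h)⟩
  refine hX.not_ge (le_card_of_neighbors_reachable hgood heven (x := x) (r := r) (K := K) x.2
    (fun y hy => hnX hy) (fun a b h => (hK h).1) (fun a b h => (hK h).2) fun y hy => ?_)
  exact (hr ⟨y, hnX hy⟩ hy).map (SimpleGraph.Embedding.map (Function.Embedding.subtype _) _).toHom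

theorem card_three_le_degree_le_innerBoundary (hgood : EvenSubgraphGood G ℓ)
    (heven : ∀ x, Even (G.degree x)) {Δ : ℕ} (hΔ : ∀ x, G.degree x ≤ Δ) (hX : X.card < ℓ) :
    (X.filter fun x => 3 ≤ G.degree x).card ≤ 3 * (Δ + 1) * (innerBoundary G X).card := by
  set Γ := G.comap ((↑) : X → V)
  set B : Finset X := (innerBoundary G X).subtype (· ∈ X)
  have hB (x : X) : x ∈ B ↔ (x : V) ∈ innerBoundary G X := Finset.mem_subtype
  have hΓ (x : X) : Γ.degree x ≤ Δ := by
    rw [degree_comap_val]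
    exact (Finset.card_le_card Finset.inter_subset_left).trans (by simpa using hΔ x)
  calc (X.filter fun x => 3 ≤ G.degree x).card
      ≤ ((Finset.univ.filter fun x => x ∈ B ∨ 3 ≤ Γ.degree x).map
          (Function.Embedding.subtype (· ∈ X))).card := by
        refine Finset.card_le_card fun x hx => ?_
        rw [Finset.mem_filter] at hx
        refine Finset.mem_map.2 ⟨⟨x, hx.1⟩, ?_, rfl⟩
        rw [Finset.mem_filter, hB]
        refine ⟨Finset.mem_univ _, or_iff_not_imp_left.2 fun hb => ?_⟩
        have hnX : G.neighborFinset x ⊆ X := by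
          simpa [← Finset.coe_subset] using neighborSet_subset_of_notMem_innerBoundary hx.1 hb
        rw [degree_comap_val, Finset.inter_eq_left.2 hnX, G.card_neighborFinset_eq_degree]
        exact hx.2
    _ ≤ 3 * (Δ + 1) * B.card := by
        rw [Finset.card_map]
        convert card_three_le_degree_le hΓ fun x hx =>
          not_isNonseparating_comap_val hgood heven hX (hx ∘ (hB x).2)
    _ ≤ 3 * (Δ + 1) * (innerBoundary G X).card :=
        Nat.mul_le_mul_left _ (by rw [Finset.card_subtype]; exact Finset.card_filter_le _ _)

end Isoperimetry

section Diameter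

variable {V : Type*} {G : SimpleGraph V} {δ : ℝ} {ℓ Δ : ℕ}

/-- The test function that vanishes on the ball of radius `r` around `u`, equals `1` off the ball
of radius `r + h`, and interpolates linearly in between. -/
noncomputable def distCutoff (G : SimpleGraph V) (u : V) (r h : ℕ) (y : V) : ℝ :=
  ((min (G.dist u y) (r + h) - r : ℕ) : ℝ) / h

theorem abs_distCutoff_sub_le (u : V) (r h : ℕ) {x y : V} (hxy : G.Adj x y) :
    |distCutoff G u r h x - distCutoff G u r h y| ≤ 1 / h := by
  have hdist := hxy.diff_dist_adj (u := u)
  have hle : min (G.dist u x) (r + h) - r ≤ min (G.dist u y) (r + h) - r + 1 := by omega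
  have hge : min (G.dist u y) (r + h) - r ≤ min (G.dist u x) (r + h) - r + 1 := by omega
  rw [distCutoff, distCutoff, ← sub_div, abs_div, Nat.abs_cast]
  gcongr
  rw [abs_le]
  constructor <;> linarith [(Nat.cast_le (α := ℝ)).2 hle, (Nat.cast_le (α := ℝ)).2 hge,
    Nat.cast_add_one (R := ℝ) (min (G.dist u x) (r + h) - r),
    Nat.cast_add_one (R := ℝ) (min (G.dist u y) (r + h) - r)]

theorem exists_walk_notMem_support_of_dist_max (hG : G.Connected) {u x y : V}
    (hmax : ∀ z, G.dist z u ≤ G.dist x u) (hy : y ≠ x) :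
    ∃ p : G.Walk y u, p.length = G.dist y u ∧ x ∉ p.support := by
  obtain ⟨p, hp⟩ := hG.exists_walk_length_eq_dist y u
  refine ⟨p, hp, fun hx => hy ?_⟩
  have hlen := congrArg SimpleGraph.Walk.length (p.take_spec hx)
  rw [SimpleGraph.Walk.length_append] at hlen
  have := G.dist_le (p.dropUntil x hx)
  have := hmax y
  exact SimpleGraph.Walk.eq_of_length_eq_zero (p := p.takeUntil x hx) (by omega)

variable [Fintype V]

theorem IsSpectralGap.exists_mul_degNormSq_sub_le (hgap : IsSpectralGap G δ)
    (hdeg : ∀ x, 0 < G.degree x) (f : V → ℝ) :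
    ∃ m, δ * degNormSq G (fun x => f x - m) ≤ dirichletEnergy G f := by
  rcases isEmpty_or_nonempty V with hV | hV
  · exact ⟨0, by simp [degNormSq, dirichletEnergy]⟩
  have hvol : 0 < ∑ x, (G.degree x : ℝ) :=
    Finset.sum_pos (fun x _ => by exact_mod_cast hdeg x) Finset.univ_nonempty
  refine ⟨(∑ x, (G.degree x : ℝ) * f x) / ∑ x, (G.degree x : ℝ),
    (hgap.poincare _ ?_).trans_eq (by simp [dirichletEnergy])⟩
  simp only [mul_sub, Finset.sum_sub_distrib, ← Finset.sum_mul]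
  field_simp
  ring

theorem dirichletEnergy_le_of_eq_off (hΔ : ∀ x, G.degree x ≤ Δ) {f : V → ℝ} {c : ℝ}
    (hlip : ∀ x y, G.Adj x y → |f x - f y| ≤ c) {B : Finset V}
    (hoff : ∀ x y, x ∉ B → y ∉ B → f x = f y) :
    dirichletEnergy G f ≤ 2 * Δ * B.card * c ^ 2 := by
  have edge (x y : V) (hxy : G.Adj x y) : (f x - f y) ^ 2 ≤
      (if x ∈ B then c ^ 2 else 0) + if y ∈ B then c ^ 2 else 0 := by
    have := sq_le_sq' (abs_le.1 (hlip x y hxy)).1 (abs_le.1 (hlip x y hxy)).2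
    split_ifs with hx hy hy
    · nlinarith [sq_nonneg c]
    · simpa
    · simpa
    · simp [hoff x y hx hy]
  calc dirichletEnergy G f
      ≤ ∑ x, ∑ y ∈ G.neighborFinset x,
          ((if x ∈ B then c ^ 2 else 0) + if y ∈ B then c ^ 2 else 0) :=
        Finset.sum_le_sum fun x _ => Finset.sum_le_sum fun y hy => edge x y (by simpa using hy)
    _ = 2 * ∑ x, (G.degree x : ℝ) * if x ∈ B then c ^ 2 else 0 := by
        simp only [Finset.sum_add_distrib]
        rw [sum_sum_neighborFinset_fst fun x => if x ∈ B then c ^ 2 else 0,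
          sum_sum_neighborFinset_snd fun x => if x ∈ B then c ^ 2 else 0]
        ring
    _ ≤ 2 * ∑ x, (Δ : ℝ) * if x ∈ B then c ^ 2 else 0 := by
        gcongr with x
        exact hΔ x
    _ = 2 * Δ * B.card * c ^ 2 := by
        rw [← Finset.mul_sum, Finset.sum_ite_mem, Finset.univ_inter, Finset.sum_const,
          nsmul_eq_mul]
        ring

theorem card_div_two_le_degNormSq_sub (hdeg : ∀ x, 0 < G.degree x) {f : V → ℝ}
    {S T : Finset V} (hS : ∀ x ∈ S, f x = 0) (hT : ∀ x ∈ T, f x = 1) (hST : S.card ≤ T.card)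
    (m : ℝ) : (S.card : ℝ) / 2 ≤ degNormSq G fun x => f x - m := by
  have hdisj : Disjoint S T := Finset.disjoint_left.2 fun x hxS hxT => by
    linarith [hS x hxS, hT x hxT]
  calc (S.card : ℝ) / 2 ≤ S.card * m ^ 2 + S.card * (1 - m) ^ 2 := by
        nlinarith [mul_nonneg (Nat.cast_nonneg (α := ℝ) S.card) (sq_nonneg (2 * m - 1))]
    _ ≤ S.card * m ^ 2 + T.card * (1 - m) ^ 2 := by gcongr
    _ = ∑ x ∈ S ∪ T, (f x - m) ^ 2 := by
        rw [Finset.sum_union hdisj, Finset.sum_eq_card_nsmul fun x hx => by rw [hS x hx],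
          Finset.sum_eq_card_nsmul fun x hx => by rw [hT x hx]]
        simp
    _ ≤ ∑ x ∈ S ∪ T, (G.degree x : ℝ) * (f x - m) ^ 2 :=
        Finset.sum_le_sum fun x _ =>
          le_mul_of_one_le_left (sq_nonneg _) (by exact_mod_cast hdeg x)
    _ ≤ degNormSq G fun x => f x - m :=
        Finset.sum_le_sum_of_subset_of_nonneg (Finset.subset_univ _) fun _ _ _ => by positivity

/-- The closed ball of radius `r` around `u` in the graph metric, as a finset. -/
noncomputable def distBall (G : SimpleGraph V) (u : V) (r : ℕ) : Finset V :=
  Finset.univ.filter fun y => G.dist u y ≤ r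

theorem mem_distBall {u y : V} {r : ℕ} : y ∈ distBall G u r ↔ G.dist u y ≤ r := by
  simp [distBall]

theorem distBall_mono (u : V) {r s : ℕ} (h : r ≤ s) : distBall G u r ⊆ distBall G u s :=
  fun _ hy => mem_distBall.2 ((mem_distBall.1 hy).trans h)

theorem distCutoff_of_mem {u y : V} {r : ℕ} (h : ℕ) (hy : y ∈ distBall G u r) :
    distCutoff G u r h y = 0 := by
  have : min (G.dist u y) (r + h) - r = 0 := by
    have := mem_distBall.1 hy
    omega
  simp [distCutoff, this]

theorem distCutoff_of_notMem {u y : V} {r h : ℕ} (hh : 0 < h) (hy : y ∉ distBall G u (r + h)) :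
    distCutoff G u r h y = 1 := by
  have : min (G.dist u y) (r + h) - r = h := by
    have := mt mem_distBall.2 hy
    omega
  rw [distCutoff, this, div_self (by positivity)]

theorem IsSpectralGap.two_mul_card_distBall_le (hgap : IsSpectralGap G δ)
    (hdeg : ∀ x, 0 < G.degree x) (hΔ : ∀ x, G.degree x ≤ Δ) (u : V) (r : ℕ) {h : ℕ} (hh : 0 < h)
    (hδh : 8 * Δ ≤ δ * (h : ℝ) ^ 2) (hhalf : 2 * (distBall G u (r + h)).card ≤ Fintype.card V) :
    2 * (distBall G u r).card ≤ (distBall G u (r + h)).card := by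
  set S := distBall G u r
  set B := distBall G u (r + h)
  have hSB : S.card ≤ Bᶜ.card := by
    have : S.card ≤ B.card := Finset.card_le_card (distBall_mono u (r.le_add_right h))
    rw [Finset.card_compl]
    omega
  have hΔ0 : (0 : ℝ) < Δ := by exact_mod_cast (hdeg u).trans_le (hΔ u)
  obtain ⟨m, hm⟩ := hgap.exists_mul_degNormSq_sub_le hdeg (distCutoff G u r h)
  have hvar : (S.card : ℝ) / 2 ≤ degNormSq G fun x => distCutoff G u r h x - m :=
    card_div_two_le_degNormSq_sub hdeg (fun _ => distCutoff_of_mem h)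
      (fun _ hx => distCutoff_of_notMem hh (Finset.mem_compl.1 hx)) hSB m
  have henergy : dirichletEnergy G (distCutoff G u r h) ≤ 2 * Δ * B.card * (1 / h) ^ 2 :=
    dirichletEnergy_le_of_eq_off hΔ (fun _ _ => abs_distCutoff_sub_le u r h) fun x y hx hy => by
      rw [distCutoff_of_notMem hh hx, distCutoff_of_notMem hh hy]
  have hcmp : 8 * Δ * ((S.card : ℝ) / 2) ≤ 2 * Δ * B.card := by
    calc 8 * Δ * ((S.card : ℝ) / 2) ≤ δ * (h : ℝ) ^ 2 * ((S.card : ℝ) / 2) := by gcongr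
      _ = δ * ((S.card : ℝ) / 2) * (h : ℝ) ^ 2 := by ring
      _ ≤ 2 * Δ * B.card * (1 / h) ^ 2 * (h : ℝ) ^ 2 := by
          exact mul_le_mul_of_nonneg_right
            ((mul_le_mul_of_nonneg_left hvar hgap.pos.le).trans (hm.trans henergy)) (sq_nonneg _)
      _ = 2 * Δ * B.card := by field_simp
  have : (2 * Δ) * (2 * (S.card : ℝ)) ≤ (2 * Δ) * B.card := by linarith
  exact_mod_cast le_of_mul_le_mul_left this (by positivity)

theorem IsSpectralGap.card_lt_two_mul_card_distBall_or (hgap : IsSpectralGap G δ)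
    (hdeg : ∀ x, 0 < G.degree x) (hΔ : ∀ x, G.degree x ≤ Δ) {h : ℕ} (hh : 0 < h)
    (hδh : 8 * Δ ≤ δ * (h : ℝ) ^ 2) (u : V) (k : ℕ) :
    Fintype.card V < 2 * (distBall G u (k * h)).card ∨ 2 ^ k ≤ (distBall G u (k * h)).card := by
  induction k with
  | zero => exact .inr (Finset.card_pos.2 ⟨u, by simp [mem_distBall]⟩)
  | succ k ih =>
    rw [add_one_mul, or_iff_not_imp_left, not_lt]
    intro hhalf
    have := hgap.two_mul_card_distBall_le hdeg hΔ u (k * h) hh hδh hhalf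
    rw [pow_succ]
    omega

theorem IsSpectralGap.dist_le (hgap : IsSpectralGap G δ) (hG : G.Connected)
    (hdeg : ∀ x, 0 < G.degree x) (hΔ : ∀ x, G.degree x ≤ Δ) {h k : ℕ} (hh : 0 < h)
    (hδh : 8 * Δ ≤ δ * (h : ℝ) ^ 2) (hk : Fintype.card V ≤ 2 ^ k) (u v : V) :
    G.dist u v ≤ 2 * (k * h) := by
  have majority (u : V) : Fintype.card V < 2 * (distBall G u (k * h)).card := by
    have : 0 < Fintype.card V := Fintype.card_pos_iff.2 ⟨u⟩
    have := hgap.card_lt_two_mul_card_distBall_or hdeg hΔ hh hδh u k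
    omega
  obtain ⟨w, hw⟩ : (distBall G u (k * h) ∩ distBall G v (k * h)).Nonempty := by
    refine Finset.inter_nonempty_of_card_lt_card_add_card (Finset.subset_univ _)
      (Finset.subset_univ _) ?_
    have := majority u
    have := majority v
    rw [Finset.card_univ]
    omega
  rw [Finset.mem_inter, mem_distBall, mem_distBall, G.dist_comm (u := v)] at hw
  have := hG.dist_triangle (u := u) (v := w) (w := v)
  omega

-- At a vertex `x` farthest from `u`, geodesics from the neighbours of `x` to `u` avoid `x`, so
-- they close the star at `x` to an even subgraph.
theorem EvenSubgraphGood.le_of_dist_le (hgood : EvenSubgraphGood G ℓ) (hG : G.Connected)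
    (heven : ∀ x, Even (G.degree x)) (hΔ : ∀ x, G.degree x ≤ Δ) {D : ℕ}
    (hD : ∀ u v, G.dist u v ≤ D) : ℓ ≤ 1 + Δ * (D + 1) := by
  obtain ⟨u⟩ := hG.nonempty
  have : Nonempty V := ⟨u⟩
  obtain ⟨x, hx⟩ := Finite.exists_max fun y => G.dist y u
  have hwalk (y : V) : ∃ S : Finset V, S.card ≤ D + 1 ∧ (G.Adj x y → x ∉ S ∧
      ∃ p : G.Walk y u, p.support.toFinset = S) := by
    by_cases hxy : G.Adj x y
    · obtain ⟨p, hp, hxp⟩ := exists_walk_notMem_support_of_dist_max hG hx hxy.ne'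
      refine ⟨_, (List.toFinset_card_le _).trans ?_, fun _ => ⟨by simpa using hxp, p, rfl⟩⟩
      rw [p.length_support, hp]
      exact Nat.succ_le_succ (hD y u)
    · exact ⟨∅, by simp, fun h => absurd h hxy⟩
  choose S hS hpath using hwalk
  set Y := (G.neighborFinset x).biUnion S
  have hYx : x ∉ Y := by simpa [Y] using fun y hy => (hpath y hy).1
  have hYS (y : V) (hy : G.Adj x y) : S y ⊆ Y :=
    Finset.subset_biUnion_of_mem S (by simpa using hy)
  have hle := le_card_of_neighbors_reachable (X := insert x Y) (r := u)
    (K := (G.induce (Y : Set V)).spanningCoe) hgood heven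
    (Finset.mem_insert_self x Y) (fun y hy => ?_) (G.spanningCoe_induce_le _) (fun a b hab => ?_)
    fun y hy => ?_
  · refine hle.trans ((Finset.card_insert_le _ _).trans ?_)
    have : Y.card ≤ Δ * (D + 1) :=
      (Finset.card_biUnion_le_card_mul _ _ _ fun y _ => hS y).trans
        (Nat.mul_le_mul_right _ (hΔ x))
    omega
  · obtain ⟨-, p, hp⟩ := hpath y hy
    exact Finset.mem_insert_of_mem (hYS y hy (by simp [← hp]))
  · have ha : a ∈ Y := by
      simp only [SimpleGraph.map_adj, SimpleGraph.comap_adj, Function.Embedding.subtype_apply,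
        Subtype.exists] at hab
      obtain ⟨_, ha, _, _, _, rfl, _⟩ := hab
      exact ha
    exact ⟨Finset.mem_insert_of_mem ha, fun h => hYx (h ▸ ha)⟩
  · obtain ⟨-, p, hp⟩ := hpath y hy
    have hsupp : ∀ z ∈ p.support, z ∈ (Y : Set V) := fun z hz =>
      hYS y hy (by simpa [← hp] using hz)
    exact ((p.induce _ hsupp).reachable.map
      (SimpleGraph.Embedding.spanningCoe _).toHom).symm

/-- The constant `C` in `ℓ √δ ≤ C log n`. -/
noncomputable def goodnessConst (Δ : ℕ) : ℝ := 1 + Δ * (6 * (8 * Δ + 1) + 1)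

theorem card_le_two_pow_ceil_two_mul_log {n : ℕ} (hn : 0 < n) :
    n ≤ 2 ^ ⌈2 * Real.log n⌉₊ := by
  have hlog : Real.log n ≤ ⌈2 * Real.log n⌉₊ * Real.log 2 := by
    have := Real.log_two_gt_d9
    have := Nat.le_ceil (2 * Real.log n)
    have := Real.log_natCast_nonneg n
    nlinarith
  rw [← Real.log_pow, Real.log_le_log_iff (by exact_mod_cast hn) (by positivity)] at hlog
  exact_mod_cast hlog

theorem EvenSubgraphGood.mul_sqrt_le (hgood : EvenSubgraphGood G ℓ) (hgap : IsSpectralGap G δ)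
    (hG : G.Connected) (hdeg : ∀ x, 0 < G.degree x) (heven : ∀ x, Even (G.degree x))
    (hΔ : ∀ x, G.degree x ≤ Δ) (hlog : 1 ≤ Real.log (Fintype.card V)) :
    (ℓ : ℝ) * √δ ≤ goodnessConst Δ * Real.log (Fintype.card V) := by
  set s := √δ
  set L := Real.log (Fintype.card V)
  have hs0 : 0 < s := Real.sqrt_pos.2 hgap.pos
  have hs1 : s ≤ 1 := Real.sqrt_le_one.2 hgap.le_one
  have hcard : 0 < Fintype.card V := Fintype.card_pos_iff.2 hG.nonempty
  have hΔ1 : (1 : ℝ) ≤ Δ := by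
    obtain ⟨u⟩ := hG.nonempty
    exact_mod_cast (hdeg u).trans_le (hΔ u)
  set h := ⌈8 * (Δ : ℝ) / s⌉₊
  set k := ⌈2 * L⌉₊
  have hh : 0 < h := Nat.ceil_pos.2 (by positivity)
  have hhs : 8 * (Δ : ℝ) ≤ h * s := (div_le_iff₀ hs0).1 (Nat.le_ceil _)
  have hδh : 8 * (Δ : ℝ) ≤ δ * (h : ℝ) ^ 2 := by
    rw [← Real.sq_sqrt hgap.pos.le, ← mul_pow, mul_comm]
    nlinarith
  have hhs' : h * s ≤ 8 * Δ + 1 := by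
    have := mul_le_mul_of_nonneg_right
      (Nat.ceil_lt_add_one (a := 8 * (Δ : ℝ) / s) (by positivity)).le hs0.le
    rw [add_mul, div_mul_cancel₀ _ hs0.ne'] at this
    linarith
  have hk : (k : ℝ) ≤ 3 * L := by
    linarith [Nat.ceil_lt_add_one (a := 2 * L) (by positivity)]
  have hℓ : (ℓ : ℝ) ≤ 1 + Δ * (2 * (k * h) + 1) := by
    exact_mod_cast hgood.le_of_dist_le hG heven hΔ
      (hgap.dist_le hG hdeg hΔ hh hδh (card_le_two_pow_ceil_two_mul_log hcard))
  calc (ℓ : ℝ) * s ≤ (1 + Δ * (2 * (k * h) + 1)) * s := by gcongr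
    _ = s + Δ * (2 * (k * (h * s)) + s) := by ring
    _ ≤ L + Δ * (2 * (3 * L * (8 * Δ + 1)) + L) := by
      have : s ≤ L := hs1.trans hlog
      gcongr
    _ = goodnessConst Δ * L := by rw [goodnessConst]; ring

end Diameter

section Levels

open MeasureTheory

theorem mul_le_sum_abs_sub_of_le_card_crossing {ι : Type*} {s : Finset ι} {p q : ι → ℝ}
    {c h : ℝ} (hc : 0 ≤ c)
    (hcross : ∀ a ∈ Set.Ico 0 h, c ≤ (s.filter fun i => a ∈ Set.Ico (p i) (q i)).card) :
    c * h ≤ ∑ i ∈ s, |p i - q i| := by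
  refine (ENNReal.ofReal_le_ofReal_iff (Finset.sum_nonneg fun i _ => abs_nonneg _)).1 ?_
  calc ENNReal.ofReal (c * h) = ∫⁻ _ in Set.Ico 0 h, ENNReal.ofReal c := by
        rw [setLIntegral_const, Real.volume_Ico, sub_zero, ENNReal.ofReal_mul hc]
    _ ≤ ∫⁻ a in Set.Ico 0 h, ∑ i ∈ s, (Set.Ico (p i) (q i)).indicator 1 a := by
        refine setLIntegral_mono' measurableSet_Ico fun a ha => ?_
        refine (ENNReal.ofReal_le_ofReal (hcross a ha)).trans_eq ?_
        simp [Set.indicator_apply]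
    _ ≤ ∫⁻ a, ∑ i ∈ s, (Set.Ico (p i) (q i)).indicator 1 a := setLIntegral_le_lintegral _ _
    _ = ∑ i ∈ s, ENNReal.ofReal (q i - p i) := by
        rw [lintegral_finsetSum _ fun i _ => measurable_one.indicator measurableSet_Ico]
        simp [lintegral_indicator_one measurableSet_Ico]
    _ ≤ ∑ i ∈ s, ENNReal.ofReal |p i - q i| :=
        Finset.sum_le_sum fun i _ => ENNReal.ofReal_le_ofReal (by
          rw [abs_sub_comm]
          exact le_abs_self _)
    _ = ENNReal.ofReal (∑ i ∈ s, |p i - q i|) :=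
        (ENNReal.ofReal_sum_of_nonneg fun i _ => abs_nonneg _).symm

variable {V : Type*} [Fintype V] {G : SimpleGraph V}

theorem card_innerBoundary_le_card_crossing (g : V → ℝ) {a h : ℝ} (hah : a < h) :
    (innerBoundary G (Finset.univ.filter (g · ≤ a))).card ≤
      ((((Finset.univ.filter (g · < h)).sigma fun x => G.neighborFinset x).filter
        fun i => a ∈ Set.Ico (g i.1) (g i.2)).card) := by
  refine (Finset.card_le_card fun x hx => ?_).trans
    (Finset.card_image_le (f := fun i : (_ : V) × V => i.1))
  simp only [innerBoundary, Finset.mem_filter, Finset.mem_univ, true_and, not_le] at hx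
  obtain ⟨hxa, y, hya, hxy⟩ := hx
  exact Finset.mem_image.2 ⟨⟨x, y⟩, by simp [hxa, hya, hxy, hxa.trans_lt hah], rfl⟩

theorem sq_mul_le_sum_degree_mul_dirichletEnergy {g : V → ℝ} {c h : ℝ} (hc : 0 ≤ c)
    (hh : 0 ≤ h) (hbdry : ∀ a ∈ Set.Ico 0 h,
      c ≤ (innerBoundary G (Finset.univ.filter (g · ≤ a))).card) :
    (c * h) ^ 2 ≤ (∑ x ∈ Finset.univ.filter (g · < h), G.degree x : ℕ) *
      dirichletEnergy G g := by
  set darts := (Finset.univ.filter (g · < h)).sigma fun x => G.neighborFinset x with hdarts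
  have hcoarea : c * h ≤ ∑ i ∈ darts, |g i.1 - g i.2| :=
    mul_le_sum_abs_sub_of_le_card_crossing hc fun a ha => (hbdry a ha).trans
      (by exact_mod_cast card_innerBoundary_le_card_crossing g ha.2)
  have hcard : darts.card = ∑ x ∈ Finset.univ.filter (g · < h), G.degree x :=
    Finset.card_sigma _ _
  have henergy : ∑ i ∈ darts, |g i.1 - g i.2| ^ 2 ≤ dirichletEnergy G g := by
    simp only [sq_abs]
    rw [hdarts, Finset.sum_sigma]
    exact Finset.sum_le_sum_of_subset_of_nonneg (Finset.subset_univ _) fun x _ _ =>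
      Finset.sum_nonneg fun _ _ => sq_nonneg _
  calc (c * h) ^ 2 ≤ (∑ i ∈ darts, |g i.1 - g i.2|) ^ 2 :=
        pow_le_pow_left₀ (mul_nonneg hc hh) hcoarea 2
    _ ≤ darts.card * ∑ i ∈ darts, |g i.1 - g i.2| ^ 2 := sq_sum_le_card_mul_sum_sq
    _ ≤ _ := by rw [hcard]; gcongr

theorem exists_card_le_and_card_lt_level (g : V → ℝ) {ℓ : ℕ} (hℓ : 0 < ℓ)
    (hn : ℓ ≤ Fintype.card V) :
    ∃ x₀, ℓ ≤ (Finset.univ.filter (g · ≤ g x₀)).card ∧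
      (Finset.univ.filter (g · < g x₀)).card < ℓ := by
  have : Nonempty V := Fintype.card_pos_iff.1 (hℓ.trans_le hn)
  set T := Finset.univ.filter fun x₀ => ℓ ≤ (Finset.univ.filter (g · ≤ g x₀)).card with hT
  have hTne : T.Nonempty := by
    obtain ⟨M, hM⟩ := Finite.exists_max g
    exact ⟨M, by simpa [hT, Finset.filter_true_of_mem fun x _ => hM x] using hn⟩
  obtain ⟨x₀, hx₀, hmin⟩ := T.exists_min_image g hTne
  refine ⟨x₀, by simpa [hT] using hx₀, ?_⟩
  rcases (Finset.univ.filter (g · < g x₀)).eq_empty_or_nonempty with hempty | hne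
  · simpa [hempty] using hℓ
  · obtain ⟨y, hy, hmax⟩ := Finset.exists_max_image _ g hne
    have hy' : g y < g x₀ := by simpa using hy
    have hyT : y ∉ T := fun h => (hmin y h).not_gt hy'
    rw [hT, Finset.mem_filter, not_and, not_le] at hyT
    exact (Finset.card_le_card fun z hz => by simpa using hmax z hz).trans_lt
      (hyT (Finset.mem_univ y))

theorem mul_sq_le_of_le_card_level (hdeg : ∀ x, 0 < G.degree x) {g : V → ℝ}
    (hg : ∀ x, 0 ≤ g x) {ℓ : ℕ} {h : ℝ}
    (hℓ : ℓ ≤ (Finset.univ.filter (g · ≤ h)).card) (m : ℝ) :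
    ℓ * m ^ 2 ≤ 2 * ℓ * h ^ 2 + 2 * degNormSq G fun x => g x - m := by
  rcases le_total (m ^ 2) (2 * h ^ 2) with hm | hm
  · have : 0 ≤ degNormSq G fun x => g x - m := degNormSq_nonneg _
    nlinarith [mul_le_mul_of_nonneg_left hm (Nat.cast_nonneg (α := ℝ) ℓ)]
  have : ℓ * (m ^ 2 - 2 * h ^ 2) ≤ 2 * degNormSq G fun x => g x - m := by
    calc ℓ * (m ^ 2 - 2 * h ^ 2)
        ≤ (Finset.univ.filter (g · ≤ h)).card * (m ^ 2 - 2 * h ^ 2) := by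
          gcongr
      _ = ∑ x ∈ Finset.univ.filter (g · ≤ h), (m ^ 2 - 2 * h ^ 2) := by
          rw [Finset.sum_const, nsmul_eq_mul]
      _ ≤ ∑ x ∈ Finset.univ.filter (g · ≤ h), 2 * (G.degree x * (g x - m) ^ 2) := by
          refine Finset.sum_le_sum fun x hx => ?_
          have hgh : g x ^ 2 ≤ h ^ 2 := pow_le_pow_left₀ (hg x) (by simpa using hx) 2
          have : (1 : ℝ) ≤ G.degree x := by exact_mod_cast hdeg x
          nlinarith [sq_nonneg (2 * g x - m), sq_nonneg (g x - m)]
      _ ≤ 2 * degNormSq G fun x => g x - m := by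
          rw [degNormSq, Finset.mul_sum]
          exact Finset.sum_le_sum_of_subset_of_nonneg (Finset.subset_univ _) fun _ _ _ => by
            positivity
  linarith

theorem degNormSq_le_degNormSq_sub_add {Δ : ℕ} (hΔ : ∀ x, G.degree x ≤ Δ) (g : V → ℝ) (m : ℝ) :
    degNormSq G g ≤ 2 * (degNormSq G fun x => g x - m) + 2 * (m ^ 2 * (Δ * Fintype.card V)) := by
  calc degNormSq G g ≤ ∑ x, (2 * (G.degree x * (g x - m) ^ 2) + 2 * (m ^ 2 * Δ)) := by
        refine Finset.sum_le_sum fun x _ => ?_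
        have : (G.degree x : ℝ) ≤ Δ := by exact_mod_cast hΔ x
        nlinarith [mul_nonneg (Nat.cast_nonneg (α := ℝ) (G.degree x)) (sq_nonneg (g x - 2 * m)),
          mul_le_mul_of_nonneg_left this (sq_nonneg m)]
    _ = _ := by
        simp only [Finset.sum_add_distrib, ← Finset.mul_sum, degNormSq, Finset.sum_const,
          Finset.card_univ, nsmul_eq_mul]
        ring

end Levels

section DirichletGap

variable {V : Type*} [Fintype V] {G : SimpleGraph V} {δ : ℝ} {ℓ Δ j : ℕ}

/-- The walk on `G` killed on `Z` has Dirichlet eigenvalue at least `ε`. The factor `2` makes up for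
`dirichletEnergy` counting edges twice, and it suffices to test nonnegative functions. -/
def HasDirichletGap (G : SimpleGraph V) (Z : Finset V) (ε : ℝ) : Prop :=
  ∀ g : V → ℝ, (∀ x, 0 ≤ g x) → (∀ x ∈ Z, g x = 0) →
    2 * ε * degNormSq G g ≤ dirichletEnergy G g

/-- The sets which the walk hits within `O(n / (ℓ δ))` steps when `j` is about `log n`: those with
`ℓ` vertices, or with `j` vertices of degree at least three. -/
def IsLargeTarget (G : SimpleGraph V) (ℓ j : ℕ) (Z : Finset V) : Prop :=
  ℓ ≤ Z.card ∨ j ≤ (Z.filter fun x => 3 ≤ G.degree x).card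

/-- The constant `C` in `δ ℓ h² ≤ C * energy` for the `ℓ`-th smallest value `h` of a test
function. -/
noncomputable def levelConst (Δ : ℕ) : ℝ := goodnessConst Δ ^ 2 * (3 * (Δ + 1)) ^ 2 * Δ

/-- The constant `C` in the Dirichlet gap `δ ℓ / (2 C n)` of a large target. -/
noncomputable def targetConst (Δ : ℕ) : ℝ := 2 + 2 * Δ * (2 * levelConst Δ + 2)

/-- The rate at which the walk on `n` vertices hits every large target. -/
noncomputable def hittingRate (Δ : ℕ) (δ : ℝ) (ℓ n : ℕ) : ℝ := δ * ℓ / (2 * targetConst Δ * n)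

theorem goodnessConst_nonneg (Δ : ℕ) : 0 ≤ goodnessConst Δ := by
  rw [goodnessConst]
  positivity

theorem levelConst_nonneg (Δ : ℕ) : 0 ≤ levelConst Δ := by
  rw [levelConst]
  positivity

theorem one_le_targetConst (Δ : ℕ) : 1 ≤ targetConst Δ := by
  have : (0 : ℝ) ≤ 2 * Δ * (2 * levelConst Δ + 2) := by
    have := levelConst_nonneg Δ
    positivity
  rw [targetConst]
  linarith

theorem EvenSubgraphGood.le_card (hgood : EvenSubgraphGood G ℓ) (heven : ∀ x, Even (G.degree x))
    [Nonempty V] : ℓ ≤ Fintype.card V :=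
  le_card_of_even_degree (X := Finset.univ) hgood le_rfl heven (fun _ => id)
    (Finset.mem_univ (Classical.arbitrary V)) fun _ _ _ => Finset.mem_univ _

theorem EvenSubgraphGood.mul_sq_level_le (hgood : EvenSubgraphGood G ℓ)
    (heven : ∀ x, Even (G.degree x)) (hΔ : ∀ x, G.degree x ≤ Δ) (hδ : 0 ≤ δ)
    (hℓj : (ℓ : ℝ) * √δ ≤ goodnessConst Δ * j) {Z : Finset V}
    (hZ : j ≤ (Z.filter fun x => 3 ≤ G.degree x).card) {g : V → ℝ} (hgZ : ∀ x ∈ Z, g x = 0)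
    {h : ℝ} (hh : 0 ≤ h) (hlevel : (Finset.univ.filter (g · < h)).card < ℓ) :
    δ * ℓ * h ^ 2 ≤ levelConst Δ * dirichletEnergy G g := by
  set κ : ℝ := 3 * (Δ + 1) with hκ
  have hκ0 : 0 < κ := by positivity
  have hbdry (a : ℝ) (ha : a ∈ Set.Ico 0 h) :
      (j : ℝ) / κ ≤ (innerBoundary G (Finset.univ.filter (g · ≤ a))).card := by
    have hcard : (Finset.univ.filter (g · ≤ a)).card < ℓ :=
      (Finset.card_le_card fun x hx => by
        simpa using (Finset.mem_filter.1 hx).2.trans_lt ha.2).trans_lt hlevel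
    have hsub : (Z.filter fun x => 3 ≤ G.degree x) ⊆
        (Finset.univ.filter (g · ≤ a)).filter fun x => 3 ≤ G.degree x := fun x hx => by
      have := Finset.mem_filter.1 hx
      simpa [hgZ x this.1, this.2] using ha.1
    have := hZ.trans ((Finset.card_le_card hsub).trans
      (card_three_le_degree_le_innerBoundary hgood heven hΔ hcard))
    rw [div_le_iff₀' hκ0, hκ]
    exact_mod_cast this
  have hvol : ∑ x ∈ Finset.univ.filter (g · < h), G.degree x ≤ Δ * ℓ :=
    calc _ ≤ (Finset.univ.filter (g · < h)).card • Δ :=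
          Finset.sum_le_card_nsmul _ _ _ fun x _ => hΔ x
      _ ≤ Δ * ℓ := by rw [smul_eq_mul, mul_comm]; gcongr
  have henergy := dirichletEnergy_nonneg (G := G) g
  have hcoarea : (j * h) ^ 2 ≤ κ ^ 2 * (Δ * ℓ * dirichletEnergy G g) := by
    calc (j * h) ^ 2 = κ ^ 2 * (j / κ * h) ^ 2 := by field_simp
      _ ≤ κ ^ 2 * ((∑ x ∈ Finset.univ.filter (g · < h), G.degree x : ℕ) * dirichletEnergy G g) := by
          gcongr
          exact sq_mul_le_sum_degree_mul_dirichletEnergy (by positivity) hh hbdry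
      _ ≤ _ := by
          gcongr
          exact_mod_cast hvol
  have hℓ0 : (0 : ℝ) < ℓ := by exact_mod_cast (Nat.zero_le _).trans_lt hlevel
  refine le_of_mul_le_mul_left ?_ hℓ0
  calc ℓ * (δ * ℓ * h ^ 2) = (ℓ * √δ) ^ 2 * h ^ 2 := by rw [mul_pow, Real.sq_sqrt hδ]; ring
    _ ≤ (goodnessConst Δ * j) ^ 2 * h ^ 2 := by gcongr
    _ = goodnessConst Δ ^ 2 * (j * h) ^ 2 := by ring
    _ ≤ goodnessConst Δ ^ 2 * (κ ^ 2 * (Δ * ℓ * dirichletEnergy G g)) := by gcongr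
    _ = ℓ * (levelConst Δ * dirichletEnergy G g) := by rw [levelConst, hκ]; ring

theorem IsSpectralGap.hasDirichletGap (hgap : IsSpectralGap G δ) (hG : G.Connected)
    (hdeg : ∀ x, 0 < G.degree x) (hgood : EvenSubgraphGood G ℓ) (hℓ : 0 < ℓ)
    (heven : ∀ x, Even (G.degree x)) (hΔ : ∀ x, G.degree x ≤ Δ)
    (hlog : 1 ≤ Real.log (Fintype.card V)) (hj : Real.log (Fintype.card V) ≤ j)
    {Z : Finset V} (hZ : IsLargeTarget G ℓ j Z) :
    HasDirichletGap G Z (hittingRate Δ δ ℓ (Fintype.card V)) := by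
  intro g hg hgZ
  have := hG.nonempty
  have hδ := hgap.pos
  have henergy := dirichletEnergy_nonneg (G := G) g
  have hℓn : ℓ ≤ Fintype.card V := hgood.le_card heven
  obtain ⟨x₀, hle, hlt⟩ := exists_card_le_and_card_lt_level g hℓ hℓn
  have hlevel : δ * ℓ * g x₀ ^ 2 ≤ levelConst Δ * dirichletEnergy G g := by
    rcases (hg x₀).eq_or_lt with h0 | h0
    · simpa [← h0] using mul_nonneg (levelConst_nonneg Δ) henergy
    refine hgood.mul_sq_level_le heven hΔ hδ.le ?_ (hZ.resolve_left fun hcard => ?_) hgZ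
      (hg x₀) hlt
    · exact (hgood.mul_sqrt_le hgap hG hdeg heven hΔ hlog).trans
        (mul_le_mul_of_nonneg_left hj (goodnessConst_nonneg Δ))
    · have : Z ⊆ Finset.univ.filter (g · < g x₀) := fun x hx => by simpa [hgZ x hx] using h0
      exact (hcard.trans (Finset.card_le_card this)).not_gt hlt
  obtain ⟨m, hm⟩ := hgap.exists_mul_degNormSq_sub_le hdeg g
  have hmean : δ * ℓ * m ^ 2 ≤ (2 * levelConst Δ + 2) * dirichletEnergy G g := by
    linarith [mul_le_mul_of_nonneg_left (mul_sq_le_of_le_card_level hdeg hg hle m) hδ.le]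
  have hC : 0 < targetConst Δ := zero_lt_one.trans_le (one_le_targetConst Δ)
  have : (0 : ℝ) < Fintype.card V := by exact_mod_cast hℓ.trans_le hℓn
  rw [hittingRate, ← mul_div_assoc, div_mul_eq_mul_div, div_le_iff₀ (by positivity)]
  calc 2 * (δ * ℓ) * degNormSq G g
      ≤ 2 * (δ * ℓ) *
          (2 * (degNormSq G fun x => g x - m) + 2 * (m ^ 2 * (Δ * Fintype.card V))) := by
        gcongr
        exact degNormSq_le_degNormSq_sub_add hΔ g m
    _ = 4 * (ℓ * (δ * degNormSq G fun x => g x - m))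
        + 4 * (Δ * Fintype.card V) * (δ * ℓ * m ^ 2) := by ring
    _ ≤ 4 * (Fintype.card V * dirichletEnergy G g)
        + 4 * (Δ * Fintype.card V) * ((2 * levelConst Δ + 2) * dirichletEnergy G g) := by
        have := degNormSq_nonneg (G := G) fun x => g x - m
        gcongr
    _ = dirichletEnergy G g * (2 * targetConst Δ * Fintype.card V) := by rw [targetConst]; ring

end DirichletGap

section Avoidance

variable {V : Type*} [Fintype V] {G : SimpleGraph V} {Z : Finset V} {ε : ℝ}

theorem hittingRate_pos {Δ : ℕ} {δ : ℝ} {ℓ n : ℕ} (hδ : 0 < δ) (hℓ : 0 < ℓ) (hn : 0 < n) :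
    0 < hittingRate Δ δ ℓ n := by
  have := one_le_targetConst Δ
  rw [hittingRate]
  positivity

theorem hittingRate_le_half {Δ : ℕ} {δ : ℝ} {ℓ n : ℕ} (hδ : δ ≤ 1) (hℓn : ℓ ≤ n) :
    hittingRate Δ δ ℓ n ≤ 1 / 2 := by
  have hC := one_le_targetConst Δ
  have hδℓ : δ * ℓ ≤ 1 * n := by gcongr
  refine div_le_of_le_mul₀ (by positivity) (by norm_num) ?_
  nlinarith [mul_le_mul_of_nonneg_right hC (Nat.cast_nonneg (α := ℝ) n)]

theorem HasDirichletGap.adjForm_self_le (hZ : HasDirichletGap G Z ε) {f : V → ℝ}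
    (hf : ∀ x, 0 ≤ f x) (hfZ : ∀ x ∈ Z, f x = 0) :
    adjForm G f f ≤ (1 - ε) * degNormSq G f := by
  have := hZ f hf hfZ
  rw [dirichletEnergy_eq] at this
  linarith

theorem adjForm_add_sub_adjForm_sub (f g : V → ℝ) :
    adjForm G (f + g) (f + g) - adjForm G (f - g) (f - g) = 4 * adjForm G f g := by
  have expand : adjForm G (f + g) (f + g) - adjForm G (f - g) (f - g)
      = 2 * adjForm G f g + 2 * adjForm G g f := by
    simp only [adjForm, Finset.mul_sum, ← Finset.sum_sub_distrib, ← Finset.sum_add_distrib]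
    exact Finset.sum_congr rfl fun x _ => Finset.sum_congr rfl fun y _ => by
      simp only [Pi.add_apply, Pi.sub_apply]
      ring
  rw [expand, adjForm_comm g f]
  ring

theorem degNormSq_add_add_degNormSq_sub (f g : V → ℝ) :
    degNormSq G (f + g) + degNormSq G (f - g) = 2 * degNormSq G f + 2 * degNormSq G g := by
  simp only [degNormSq, Finset.mul_sum, ← Finset.sum_add_distrib]
  exact Finset.sum_congr rfl fun x _ => by
    simp only [Pi.add_apply, Pi.sub_apply]
    ring

theorem neg_adjForm_self_le (f : V → ℝ) :
    -adjForm G f f ≤ adjForm G (fun x => |f x|) fun x => |f x| := by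
  simp only [adjForm, ← Finset.sum_neg_distrib]
  exact Finset.sum_le_sum fun x _ => Finset.sum_le_sum fun y _ => by
    rw [← abs_mul]
    exact neg_le_abs _

theorem HasDirichletGap.two_mul_adjForm_le (hZ : HasDirichletGap G Z ε) {f g : V → ℝ}
    (hf : ∀ x, 0 ≤ f x) (hfZ : ∀ x ∈ Z, f x = 0) (hg : ∀ x, 0 ≤ g x) (hgZ : ∀ x ∈ Z, g x = 0) :
    2 * adjForm G f g ≤ (1 - ε) * (degNormSq G f + degNormSq G g) := by
  have hadd := hZ.adjForm_self_le (f := f + g) (fun x => add_nonneg (hf x) (hg x))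
    fun x hx => by simp [hfZ x hx, hgZ x hx]
  have hsub : -adjForm G (f - g) (f - g) ≤ (1 - ε) * degNormSq G (f - g) := by
    refine (neg_adjForm_self_le _).trans ((hZ.adjForm_self_le (fun x => abs_nonneg _)
      fun x hx => by simp [hfZ x hx, hgZ x hx]).trans_eq ?_)
    simp only [degNormSq, sq_abs]
  have hpolar := adjForm_add_sub_adjForm_sub (G := G) f g
  have hparallel := degNormSq_add_add_degNormSq_sub (G := G) f g
  linear_combination (hadd + hsub - hpolar) / 2 + (1 - ε) / 2 * hparallel

/-- One step of the walk killed on `Z`, acting on functions. -/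
noncomputable def killedStep (G : SimpleGraph V) (Z : Finset V) (f : V → ℝ) (x : V) : ℝ :=
  if x ∈ Z then 0 else (∑ y ∈ G.neighborFinset x, f y) / G.degree x

theorem killedStep_of_mem {f : V → ℝ} {x : V} (hx : x ∈ Z) : killedStep G Z f x = 0 :=
  if_pos hx

theorem killedStep_nonneg {f : V → ℝ} (hf : ∀ x, 0 ≤ f x) (x : V) : 0 ≤ killedStep G Z f x := by
  rw [killedStep]
  split_ifs
  · rfl
  · exact div_nonneg (Finset.sum_nonneg fun y _ => hf y) (Nat.cast_nonneg _)

theorem killedStep_le_one {f : V → ℝ} (hf : ∀ x, f x ≤ 1) (x : V) : killedStep G Z f x ≤ 1 := by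
  rw [killedStep]
  split_ifs
  · exact zero_le_one
  · refine div_le_one_of_le₀ ?_ (Nat.cast_nonneg _)
    simpa using Finset.sum_le_card_nsmul (G.neighborFinset x) f 1 fun y _ => hf y

theorem degNormSq_killedStep (hdeg : ∀ x, 0 < G.degree x) (f : V → ℝ) :
    degNormSq G (killedStep G Z f) = adjForm G (killedStep G Z f) f := by
  refine Finset.sum_congr rfl fun x _ => ?_
  have hx : (G.degree x : ℝ) ≠ 0 := by exact_mod_cast (hdeg x).ne'
  rw [← Finset.mul_sum, killedStep]
  split_ifs
  · simp
  · field_simp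

theorem HasDirichletGap.degNormSq_killedStep_le (hZ : HasDirichletGap G Z ε) (hε : ε < 1)
    (hdeg : ∀ x, 0 < G.degree x) {f : V → ℝ} (hf : ∀ x, 0 ≤ f x) (hfZ : ∀ x ∈ Z, f x = 0) :
    degNormSq G (killedStep G Z f) ≤ (1 - ε) ^ 2 * degNormSq G f := by
  have hε' : 0 < 1 - ε := sub_pos.2 hε
  have hpolar := hZ.two_mul_adjForm_le (f := killedStep G Z f) (g := (1 - ε) • f)
    (killedStep_nonneg hf)
    (fun _ => killedStep_of_mem) (fun x => mul_nonneg hε'.le (hf x)) fun x hx => by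
      simp [hfZ x hx]
  have hadj : adjForm G (killedStep G Z f) ((1 - ε) • f)
      = (1 - ε) * adjForm G (killedStep G Z f) f := by
    simp only [adjForm, Finset.mul_sum, Pi.smul_apply, smul_eq_mul]
    exact Finset.sum_congr rfl fun x _ => Finset.sum_congr rfl fun y _ => by ring
  have hnorm : degNormSq G ((1 - ε) • f) = (1 - ε) ^ 2 * degNormSq G f := by
    simp only [degNormSq, Finset.mul_sum, Pi.smul_apply, smul_eq_mul]
    exact Finset.sum_congr rfl fun x _ => by ring
  rw [hadj, hnorm, ← degNormSq_killedStep hdeg] at hpolar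
  refine le_of_mul_le_mul_left ?_ hε'
  linarith

/-- The probability that the walk started at a given vertex makes its first `k` departures from
vertices outside `Z`. -/
noncomputable def avoidProb (G : SimpleGraph V) (Z : Finset V) : ℕ → V → ℝ
  | 0 => 1
  | k + 1 => killedStep G Z (avoidProb G Z k)

theorem avoidProb_nonneg (k : ℕ) (x : V) : 0 ≤ avoidProb G Z k x := by
  induction k generalizing x with
  | zero => exact zero_le_one
  | succ k ih => exact killedStep_nonneg ih x

theorem avoidProb_le_one (k : ℕ) (x : V) : avoidProb G Z k x ≤ 1 := by
  induction k generalizing x with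
  | zero => exact le_rfl
  | succ k ih => exact killedStep_le_one ih x

theorem HasDirichletGap.degNormSq_avoidProb_le (hZ : HasDirichletGap G Z ε) (hε : ε < 1)
    (hdeg : ∀ x, 0 < G.degree x) {Δ : ℕ} (hΔ : ∀ x, G.degree x ≤ Δ) (k : ℕ) :
    degNormSq G (avoidProb G Z (k + 1)) ≤ ((1 - ε) ^ k) ^ 2 * (Δ * Fintype.card V) := by
  induction k with
  | zero =>
    calc degNormSq G (avoidProb G Z 1) ≤ ∑ _x : V, (Δ : ℝ) * 1 := by
          refine Finset.sum_le_sum fun x _ => ?_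
          have := pow_le_one₀ (n := 2) (avoidProb_nonneg (G := G) (Z := Z) 1 x)
            (avoidProb_le_one 1 x)
          gcongr
          exact hΔ x
      _ = ((1 - ε) ^ 0) ^ 2 * (Δ * Fintype.card V) := by simp [mul_comm]
  | succ k ih =>
    calc degNormSq G (avoidProb G Z (k + 1 + 1))
        ≤ (1 - ε) ^ 2 * degNormSq G (avoidProb G Z (k + 1)) :=
          hZ.degNormSq_killedStep_le hε hdeg (avoidProb_nonneg _) fun _ => killedStep_of_mem
      _ ≤ (1 - ε) ^ 2 * (((1 - ε) ^ k) ^ 2 * (Δ * Fintype.card V)) := by gcongr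
      _ = ((1 - ε) ^ (k + 1)) ^ 2 * (Δ * Fintype.card V) := by ring

theorem HasDirichletGap.avoidProb_le (hZ : HasDirichletGap G Z ε) (hε : ε < 1)
    (hdeg : ∀ x, 0 < G.degree x) {Δ : ℕ} (hΔ : ∀ x, G.degree x ≤ Δ) (k : ℕ) (u : V) :
    avoidProb G Z (k + 1) u ≤ (1 - ε) ^ k * (Δ * Fintype.card V) := by
  have hvol : (1 : ℝ) ≤ Δ * Fintype.card V := by
    have := (hdeg u).trans_le (hΔ u)
    have := Fintype.card_pos_iff.2 ⟨u⟩
    exact_mod_cast Nat.mul_pos ‹0 < Δ› ‹_›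
  have : 0 < 1 - ε := sub_pos.2 hε
  refine le_of_sq_le_sq ?_ (by positivity)
  calc avoidProb G Z (k + 1) u ^ 2
      ≤ G.degree u * avoidProb G Z (k + 1) u ^ 2 :=
        le_mul_of_one_le_left (sq_nonneg _) (by exact_mod_cast hdeg u)
    _ ≤ degNormSq G (avoidProb G Z (k + 1)) :=
        Finset.single_le_sum (f := fun x => (G.degree x : ℝ) * avoidProb G Z (k + 1) x ^ 2)
          (fun x _ => by positivity) (Finset.mem_univ u)
    _ ≤ ((1 - ε) ^ k) ^ 2 * (Δ * Fintype.card V) := hZ.degNormSq_avoidProb_le hε hdeg hΔ k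
    _ ≤ ((1 - ε) ^ k) ^ 2 * (Δ * Fintype.card V) ^ 2 := by
        gcongr
        exact le_self_pow₀ hvol two_ne_zero
    _ = ((1 - ε) ^ k * (Δ * Fintype.card V)) ^ 2 := by ring

end Avoidance

section BlueGraph

open scoped symmDiff

variable {V : Type*} {G : SimpleGraph V} {a b u v x y : V} {h : List V}

theorem trav_cons_cons (x y : V) (h : List V) : trav (x :: y :: h) = s(x, y) :: trav (y :: h) := by
  simp [trav]

theorem mem_of_mem_trav (hab : s(a, b) ∈ trav h) : a ∈ h := by
  obtain ⟨⟨p, q⟩, hpq, heq⟩ := List.mem_map.1 hab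
  have hmem := List.of_mem_zip hpq
  rcases Sym2.eq_iff.1 heq with ⟨rfl, rfl⟩ | ⟨rfl, rfl⟩
  · exact hmem.1
  · exact List.mem_of_mem_tail hmem.2

/-- The blue graph of the E-process: the edges of `G` not traversed by the history `h`. -/
def blueGraph (G : SimpleGraph V) (h : List V) : SimpleGraph V :=
  G.deleteEdges {e | e ∈ trav h}

theorem blueGraph_adj : (blueGraph G h).Adj a b ↔ G.Adj a b ∧ s(a, b) ∉ trav h :=
  SimpleGraph.deleteEdges_adj

theorem blueGraph_le (G : SimpleGraph V) (h : List V) : blueGraph G h ≤ G :=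
  SimpleGraph.deleteEdges_le _

theorem blueGraph_cons_cons_adj : (blueGraph G (x :: y :: h)).Adj a b ↔
    (blueGraph G (y :: h)).Adj a b ∧ s(a, b) ≠ s(x, y) := by
  rw [blueGraph_adj, blueGraph_adj, trav_cons_cons, List.mem_cons, not_or]
  tauto

theorem blueGraph_cons_cons_of_adj (hyx : (blueGraph G (y :: h)).Adj y x) :
    blueGraph G (x :: y :: h) = blueGraph G (y :: h) ∆ SimpleGraph.edge x y := by
  ext a b
  rw [symmDiff_adj_iff, blueGraph_cons_cons_adj, SimpleGraph.edge_adj, Xor, ← Sym2.eq_iff]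
  have : s(a, b) = s(x, y) → (blueGraph G (y :: h)).Adj a b := fun hab => by
    rwa [← SimpleGraph.mem_edgeSet, hab, Sym2.eq_swap]
  have : s(a, b) = s(x, y) → a ≠ b := fun hab => by
    rintro rfl
    exact hyx.ne' (by grind)
  tauto

theorem blueGraph_cons_cons_of_not_adj (hyx : ¬ (blueGraph G (y :: h)).Adj y x) :
    blueGraph G (x :: y :: h) = blueGraph G (y :: h) := by
  ext a b
  rw [blueGraph_cons_cons_adj, and_iff_left_iff_imp]
  rintro hab heq
  rw [← SimpleGraph.mem_edgeSet, heq, Sym2.eq_swap] at hab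
  exact hyx hab

theorem blueGraph_adj_of_notMem (hv : v ∉ h) (hvb : G.Adj v b) : (blueGraph G h).Adj v b :=
  blueGraph_adj.2 ⟨hvb, fun hmem => hv (mem_of_mem_trav hmem)⟩

/-- The vertices from which a uniformly random (red) step was made. -/
noncomputable def redVertices (G : SimpleGraph V) : List V → List V
  | [] => []
  | [_] => []
  | _ :: y :: h =>
    if ∃ z, (blueGraph G (y :: h)).Adj y z then redVertices G (y :: h)
    else y :: redVertices G (y :: h)

/-- The vertex reached by the last red step, or the start of the history if there is none. Between
red steps the process follows a blue trail issuing from this vertex. -/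
noncomputable def anchor (G : SimpleGraph V) (u : V) : List V → V
  | [] => u
  | [x] => x
  | x :: y :: h => if ∃ z, (blueGraph G (y :: h)).Adj y z then anchor G u (y :: h) else x

/-- The histories of the E-process started at `u` under some valid rule. -/
inductive IsHistory (G : SimpleGraph V) (u : V) : List V → Prop
  | start : IsHistory G u [u]
  | blue {x y : V} {h : List V} (hh : IsHistory G u (y :: h))
      (hyx : (blueGraph G (y :: h)).Adj y x) : IsHistory G u (x :: y :: h)
  | red {x y : V} {h : List V} (hh : IsHistory G u (y :: h))
      (hred : ¬ ∃ z, (blueGraph G (y :: h)).Adj y z) (hyx : G.Adj y x) : IsHistory G u (x :: y :: h)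

theorem not_blueGraph_adj_of_mem_redVertices (w : V) :
    ∀ {h : List V}, v ∈ redVertices G h → ¬ (blueGraph G h).Adj v w
  | x :: y :: h, hv, hvw => by
    have hvw' := (blueGraph_cons_cons_adj.1 hvw).1
    rw [redVertices] at hv
    split_ifs at hv with hblue
    · exact not_blueGraph_adj_of_mem_redVertices w hv hvw'
    · rcases List.mem_cons.1 hv with rfl | hv
      · exact hblue ⟨w, hvw'⟩
      · exact not_blueGraph_adj_of_mem_redVertices w hv hvw'

theorem IsHistory.mem_edgeSet_of_mem_trav (hh : IsHistory G u h) :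
    ∀ e ∈ trav h, e ∈ G.edgeSet := by
  induction hh with
  | start => simp [trav]
  | blue _ hyx ih =>
    rw [trav_cons_cons]
    exact List.forall_mem_cons.2 ⟨(blueGraph_le _ _ hyx).symm, ih⟩
  | red _ _ hyx ih =>
    rw [trav_cons_cons]
    exact List.forall_mem_cons.2 ⟨hyx.symm, ih⟩

theorem IsHistory.length_le_card_toFinset_trav (hh : IsHistory G u h) :
    h.length ≤ 1 + (redVertices G h).length + (trav h).toFinset.card := by
  induction hh with
  | start => simp [redVertices]
  | @blue x y h _ hyx ih =>
    have hnew : s(x, y) ∉ (trav (y :: h)).toFinset := by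
      rw [Sym2.eq_swap, List.mem_toFinset]
      exact (blueGraph_adj.1 hyx).2
    rw [redVertices, if_pos ⟨x, hyx⟩, trav_cons_cons, List.toFinset_cons,
      Finset.card_insert_of_notMem hnew]
    simp only [List.length_cons] at ih ⊢
    lia
  | @red x y h _ hred _ ih =>
    have hmono := Finset.card_le_card (Finset.subset_insert s(x, y) (trav (y :: h)).toFinset)
    rw [redVertices, if_neg hred, trav_cons_cons, List.toFinset_cons]
    simp only [List.length_cons] at ih ⊢
    lia

variable [Fintype V]

theorem eq_of_degreeParity_endpoints {B : SimpleGraph V} {y w : V}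
    (hB : ∀ a, degreeParity B a = (if a = y then 1 else 0) + if a = w then 1 else 0)
    (hy : ¬ ∃ z, B.Adj y z) : w = y := by
  by_contra hne
  have := hB y
  simp [degreeParity_eq_sum, not_exists.1 hy, Ne.symm hne] at this

theorem IsHistory.degreeParity_blueGraph (heven : ∀ a, Even (G.degree a)) {x : V} {h : List V} :
    IsHistory G u (x :: h) → ∀ a, degreeParity (blueGraph G (x :: h)) a =
      (if a = x then 1 else 0) + if a = anchor G u (x :: h) then 1 else 0
  | .start, a => by
    have : blueGraph G [u] = G := by simp [blueGraph, trav]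
    rw [this, degreeParity_eq_zero_iff.2 (heven a), anchor, CharTwo.add_self_eq_zero]
  | .blue (x := x) (y := y) hh hyx, a => by
    have hblue : ∃ z, (blueGraph G (y :: _)).Adj y z := ⟨x, hyx⟩
    rw [blueGraph_cons_cons_of_adj hyx, degreeParity_symmDiff, degreeParity_edge hyx.ne',
      hh.degreeParity_blueGraph heven, anchor, if_pos hblue]
    linear_combination CharTwo.add_self_eq_zero (if a = y then (1 : ZMod 2) else 0)
  | .red hh hred _, a => by
    have hparity := hh.degreeParity_blueGraph heven
    rw [blueGraph_cons_cons_of_not_adj fun hyx => hred ⟨_, hyx⟩, hparity,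
      eq_of_degreeParity_endpoints hparity hred, anchor, if_neg hred, CharTwo.add_self_eq_zero,
      CharTwo.add_self_eq_zero]

theorem IsHistory.anchor_eq (hh : IsHistory G u (y :: h)) (heven : ∀ a, Even (G.degree a))
    (hred : ¬ ∃ z, (blueGraph G (y :: h)).Adj y z) : anchor G u (y :: h) = y :=
  eq_of_degreeParity_endpoints (hh.degreeParity_blueGraph heven) hred

theorem card_edgeFinset_le_mul_card {Δ : ℕ} (hΔ : ∀ a, G.degree a ≤ Δ) :
    G.edgeFinset.card ≤ Δ * Fintype.card V := by
  have hsum : ∑ a, G.degree a ≤ Fintype.card V * Δ := Finset.sum_le_card_nsmul _ _ _ fun a _ => hΔ a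
  rw [G.sum_degrees_eq_twice_card_edges, mul_comm _ Δ] at hsum
  lia

theorem IsHistory.length_le (hh : IsHistory G u h) {Δ : ℕ} (hΔ : ∀ a, G.degree a ≤ Δ) :
    h.length ≤ 1 + (redVertices G h).length + Δ * Fintype.card V := by
  have hsub : (trav h).toFinset ⊆ G.edgeFinset := fun e he =>
    SimpleGraph.mem_edgeFinset.2 (hh.mem_edgeSet_of_mem_trav e (List.mem_toFinset.1 he))
  have := (Finset.card_le_card hsub).trans (card_edgeFinset_le_mul_card hΔ)
  have := hh.length_le_card_toFinset_trav
  lia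

/-- An even subgraph `B` of `G` containing all edges of `G` at `v`. -/
structure IsEvenAround (G : SimpleGraph V) (v : V) (B : SimpleGraph V) : Prop where
  le : B ≤ G
  even_degree : ∀ a, Even (B.degree a)
  adj : ∀ b, G.Adj v b → B.Adj v b

/-- A family of vertex sets such that every even subgraph around `v` connects `v` to all vertices of
some member of `F`. -/
def IsTargetFamily (G : SimpleGraph V) (v : V) (F : Finset (Finset V)) : Prop :=
  ∀ B, IsEvenAround G v B → ∃ Z ∈ F, ∀ z ∈ Z, B.Reachable v z

theorem IsEvenAround.exists_adj {B : SimpleGraph V} (hB : IsEvenAround G v B)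
    (hdeg : ∀ a, 0 < G.degree a) (hva : B.Reachable v a) : ∃ b, B.Adj a b := by
  obtain ⟨w⟩ := hva.symm
  cases w with
  | nil =>
    obtain ⟨b, hb⟩ := (G.degree_pos_iff_exists_adj a).1 (hdeg a)
    exact ⟨b, hB.adj b hb⟩
  | cons hab _ => exact ⟨_, hab⟩

theorem IsHistory.isEvenAround_blueGraph (hh : IsHistory G u (y :: h))
    (heven : ∀ a, Even (G.degree a)) (hred : ¬ ∃ z, (blueGraph G (y :: h)).Adj y z)
    (hv : v ∉ y :: h) : IsEvenAround G v (blueGraph G (y :: h)) where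
  le := blueGraph_le _ _
  even_degree a := by
    rw [← degreeParity_eq_zero_iff, hh.degreeParity_blueGraph heven, hh.anchor_eq heven hred,
      CharTwo.add_self_eq_zero]
  adj b hb := blueGraph_adj_of_notMem hv hb

-- While `v` is unvisited, its blue component at a red step is even and misses every vertex
-- from which a red step was made.
theorem IsTargetFamily.exists_forall_redVertices_notMem {F : Finset (Finset V)}
    (hF : IsTargetFamily G v F) (hh : IsHistory G u h) (heven : ∀ a, Even (G.degree a))
    (hdeg : ∀ a, 0 < G.degree a) (hv : v ∉ h) (hne : redVertices G h ≠ []) :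
    ∃ Z ∈ F, ∀ r ∈ redVertices G h, r ∉ Z := by
  induction hh with
  | start => simp [redVertices] at hne
  | blue _ hyx ih =>
    rw [redVertices, if_pos ⟨_, hyx⟩] at hne ⊢
    exact ih (fun hmem => hv (List.mem_cons_of_mem _ hmem)) hne
  | red hh hred _ _ =>
    have hB := hh.isEvenAround_blueGraph heven hred (List.not_mem_of_not_mem_cons hv)
    obtain ⟨Z, hZF, hZ⟩ := hF _ hB
    refine ⟨Z, hZF, fun r hr hrZ => ?_⟩
    obtain ⟨b, hb⟩ := hB.exists_adj hdeg (hZ r hrZ)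
    refine not_blueGraph_adj_of_mem_redVertices b hr ?_
    rwa [blueGraph_cons_cons_of_not_adj fun hyx => hred ⟨_, hyx⟩]

end BlueGraph

section Trajectories

variable {V : Type*} [Fintype V] {G : SimpleGraph V} {A : List V → V} {u y : V} {h : List V}

theorem eStep_of_blue (hblue : ∃ z, (blueGraph G (y :: h)).Adj y z) (x : V) :
    eStep G A (y :: h) x = if x = A (y :: h) then 1 else 0 := by
  simp only [blueGraph_adj] at hblue
  rw [eStep, if_pos hblue]

theorem eStep_of_red (hred : ¬ ∃ z, (blueGraph G (y :: h)).Adj y z) (x : V) :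
    eStep G A (y :: h) x = if G.Adj y x then 1 / (G.degree y : ℝ) else 0 := by
  simp only [blueGraph_adj] at hred
  rw [eStep, if_neg hred, ncard_neighborSet]

theorem sum_eStep_mul_of_blue (hblue : ∃ z, (blueGraph G (y :: h)).Adj y z) (f : V → ℝ) :
    ∑ x, eStep G A (y :: h) x * f x = f (A (y :: h)) := by
  simp [eStep_of_blue hblue]

theorem sum_eStep_mul_of_red (hred : ¬ ∃ z, (blueGraph G (y :: h)).Adj y z) (f : V → ℝ) :
    ∑ x, eStep G A (y :: h) x * f x = (∑ x ∈ G.neighborFinset y, f x) / G.degree y := by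
  simp only [eStep_of_red hred, ite_mul, zero_mul, Finset.sum_div, G.neighborFinset_eq_filter,
    Finset.sum_filter, one_div, inv_mul_eq_div, ite_div, zero_div]

theorem eStep_nonneg (h : List V) (x : V) : 0 ≤ eStep G A h x := by
  cases h with
  | nil => exact le_rfl
  | cons y h =>
    rw [eStep]
    split_ifs <;> positivity

theorem trajProb_nonneg : ∀ h : List V, 0 ≤ trajProb G A u h
  | [] => le_rfl
  | [x] => by rw [trajProb]; split_ifs <;> norm_num
  | _ :: y :: h => mul_nonneg (eStep_nonneg _ _) (trajProb_nonneg (y :: h))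

theorem isHistory_of_trajProb_ne_zero (hA : ValidRule G A) :
    ∀ {h : List V}, trajProb G A u h ≠ 0 → IsHistory G u h
  | [], h0 => absurd rfl h0
  | [x], h0 => by
    obtain rfl : x = u := by_contra fun hne => h0 (if_neg hne)
    exact .start
  | x :: y :: h, h0 => by
    have hh := isHistory_of_trajProb_ne_zero hA (right_ne_zero_of_mul h0)
    have hstep : eStep G A (y :: h) x ≠ 0 := left_ne_zero_of_mul h0
    by_cases hblue : ∃ z, (blueGraph G (y :: h)).Adj y z
    · rw [eStep_of_blue hblue] at hstep
      obtain rfl : x = A (y :: h) := by_contra fun hne => hstep (if_neg hne)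
      refine .blue hh (blueGraph_adj.2 (hA y h ?_))
      simpa only [blueGraph_adj] using hblue
    · rw [eStep_of_red hblue] at hstep
      exact .red hh hblue (by_contra fun hne => hstep (if_neg hne))

theorem sum_ofFn_succ (t : ℕ) (F : List V → ℝ) :
    ∑ f : Fin (t + 1) → V, F (List.ofFn f) =
      ∑ f : Fin t → V, ∑ x, F (x :: List.ofFn f) := by
  rw [← (Fin.consEquiv fun _ : Fin (t + 1) => V).sum_comp, Fintype.sum_prod_type, Finset.sum_comm]
  simp [Fin.consEquiv, List.ofFn_succ]

theorem sum_trajProb_mul_le {F : List V → ℝ}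
    (hF : ∀ y h, trajProb G A u (y :: h) ≠ 0 →
      ∑ x, eStep G A (y :: h) x * F (x :: y :: h) ≤ F (y :: h)) (t : ℕ) :
    ∑ f : Fin (t + 1) → V, trajProb G A u (List.ofFn f) * F (List.ofFn f) ≤ F [u] := by
  induction t with
  | zero =>
    rw [sum_ofFn_succ 0 fun l => trajProb G A u l * F l]
    simp [trajProb]
  | succ t ih =>
    refine le_trans ?_ ih
    rw [sum_ofFn_succ (t + 1) fun l => trajProb G A u l * F l]
    refine Finset.sum_le_sum fun f _ => ?_
    obtain ⟨y, h, hyh⟩ : ∃ y h, List.ofFn f = y :: h := ⟨_, _, List.ofFn_succ⟩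
    rw [hyh]
    by_cases h0 : trajProb G A u (y :: h) = 0
    · simp [trajProb, h0]
    calc ∑ x, trajProb G A u (x :: y :: h) * F (x :: y :: h)
        = trajProb G A u (y :: h) * ∑ x, eStep G A (y :: h) x * F (x :: y :: h) := by
          rw [Finset.mul_sum]
          exact Finset.sum_congr rfl fun x _ => by rw [trajProb]; ring
      _ ≤ trajProb G A u (y :: h) * F (y :: h) :=
          mul_le_mul_of_nonneg_left (hF y h h0) (trajProb_nonneg _)

theorem uncovProb_le_one (t : ℕ) : uncovProb G A u t ≤ 1 := by
  calc uncovProb G A u t ≤ ∑ f : Fin (t + 1) → V, trajProb G A u (List.ofFn f) * 1 := by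
        refine Finset.sum_le_sum fun f _ => ?_
        split_ifs
        · simpa using trajProb_nonneg _
        · exact (mul_one _).ge
    _ ≤ 1 := by
        refine sum_trajProb_mul_le (F := fun _ => 1) (fun y h _ => ?_) t
        by_cases hblue : ∃ z, (blueGraph G (y :: h)).Adj y z
        · rw [sum_eStep_mul_of_blue hblue fun _ => 1]
        · rw [sum_eStep_mul_of_red hblue fun _ => 1]
          simpa using div_self_le_one _

theorem uncovProb_eq_zero_of_subsingleton [Subsingleton V] (t : ℕ) : uncovProb G A u t = 0 :=
  Finset.sum_eq_zero fun _ _ => if_pos fun _ => ⟨0, Subsingleton.elim _ _⟩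

end Trajectories

section Supermartingale

variable {V : Type*} [Fintype V] {G : SimpleGraph V} {A : List V → V} {u : V} {Z : Finset V}
  {K : ℕ}

/-- The conditional probability, given the history `h`, that the first `K` red steps all start
outside `Z`. -/
noncomputable def avoidPotential (G : SimpleGraph V) (u : V) (Z : Finset V) (K : ℕ)
    (h : List V) : ℝ :=
  if ∀ r ∈ redVertices G h, r ∉ Z then
    avoidProb G Z (K - (redVertices G h).length) (anchor G u h)
  else 0

theorem avoidPotential_nonneg (h : List V) : 0 ≤ avoidPotential G u Z K h := by
  rw [avoidPotential]
  split_ifs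
  · exact avoidProb_nonneg _ _
  · exact le_rfl

theorem killedStep_avoidProb_pred_le (k : ℕ) (x : V) :
    killedStep G Z (avoidProb G Z (k - 1)) x ≤ avoidProb G Z k x := by
  cases k with
  | zero => exact killedStep_le_one (fun _ => le_rfl) x
  | succ k => exact le_rfl

theorem sum_avoidPotential_cons_div_degree_le {y : V} {h : List V}
    (hred : ¬ ∃ z, (blueGraph G (y :: h)).Adj y z) (hy : anchor G u (y :: h) = y) :
    (∑ x ∈ G.neighborFinset y, avoidPotential G u Z K (x :: y :: h)) / G.degree y ≤
      avoidPotential G u Z K (y :: h) := by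
  by_cases hhit : y ∈ Z ∨ ∃ r ∈ redVertices G (y :: h), r ∈ Z
  · have hzero (x : V) : avoidPotential G u Z K (x :: y :: h) = 0 := by
      rw [avoidPotential, redVertices, if_neg hred, if_neg]
      simpa [not_and_or, imp_iff_not_or] using hhit
    simpa [hzero] using avoidPotential_nonneg _
  · obtain ⟨hyZ, hrZ⟩ : y ∉ Z ∧ ∀ r ∈ redVertices G (y :: h), r ∉ Z := by simpa using hhit
    have hcons (x : V) : avoidPotential G u Z K (x :: y :: h) =
        avoidProb G Z (K - (redVertices G (y :: h)).length - 1) x := by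
      rw [avoidPotential, redVertices, if_neg hred, if_pos (by simpa [hyZ] using hrZ),
        anchor, if_neg hred, List.length_cons, Nat.sub_sub]
    calc (∑ x ∈ G.neighborFinset y, avoidPotential G u Z K (x :: y :: h)) / G.degree y
        = killedStep G Z (avoidProb G Z (K - (redVertices G (y :: h)).length - 1)) y := by
          simp only [hcons, killedStep, if_neg hyZ]
      _ ≤ avoidProb G Z (K - (redVertices G (y :: h)).length) y :=
          killedStep_avoidProb_pred_le _ y
      _ = avoidPotential G u Z K (y :: h) := by rw [avoidPotential, if_pos hrZ, hy]

theorem sum_trajProb_mul_avoidPotential_le (hA : ValidRule G A)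
    (heven : ∀ a, Even (G.degree a)) (t : ℕ) :
    ∑ f : Fin (t + 1) → V, trajProb G A u (List.ofFn f) * avoidPotential G u Z K (List.ofFn f) ≤
      avoidProb G Z K u := by
  refine (sum_trajProb_mul_le (fun y h h0 => ?_) t).trans_eq ?_
  · have hh := isHistory_of_trajProb_ne_zero hA h0
    by_cases hblue : ∃ z, (blueGraph G (y :: h)).Adj y z
    · rw [sum_eStep_mul_of_blue hblue fun x => avoidPotential G u Z K (x :: y :: h)]
      simp only [avoidPotential, redVertices, anchor, if_pos hblue, le_refl]
    · rw [sum_eStep_mul_of_red hblue fun x => avoidPotential G u Z K (x :: y :: h)]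
      exact sum_avoidPotential_cons_div_degree_le hblue (hh.anchor_eq heven hblue)
  · simp [avoidPotential, redVertices, anchor]

theorem IsTargetFamily.exists_avoidPotential_eq_one {v : V} {F : Finset (Finset V)}
    (hF : IsTargetFamily G v F) {h : List V} (hh : IsHistory G u h)
    (heven : ∀ a, Even (G.degree a)) (hdeg : ∀ a, 0 < G.degree a) {Δ k : ℕ}
    (hΔ : ∀ a, G.degree a ≤ Δ) (hlen : h.length = Δ * Fintype.card V + 1 + k + 1) (hv : v ∉ h) :
    ∃ Z ∈ F, avoidPotential G u Z (k + 1) h = 1 := by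
  have hred : k + 1 ≤ (redVertices G h).length := by
    have := hh.length_le hΔ
    lia
  have hne : redVertices G h ≠ [] := List.ne_nil_of_length_pos (k.succ_pos.trans_le hred)
  obtain ⟨Z, hZF, hZ⟩ := hF.exists_forall_redVertices_notMem hh heven hdeg hv hne
  refine ⟨Z, hZF, ?_⟩
  rw [avoidPotential, if_pos hZ, Nat.sub_eq_zero_of_le hred]
  rfl

theorem trajProb_le_sum_avoidPotential (hA : ValidRule G A) (heven : ∀ a, Even (G.degree a))
    (hdeg : ∀ a, 0 < G.degree a) {Δ k : ℕ} (hΔ : ∀ a, G.degree a ≤ Δ)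
    {F : V → Finset (Finset V)} (hF : ∀ v, IsTargetFamily G v (F v)) {h : List V}
    (hlen : h.length = Δ * Fintype.card V + 1 + k + 1) {v : V} (hv : v ∉ h) :
    trajProb G A u h ≤ ∑ v, ∑ Z ∈ F v, trajProb G A u h * avoidPotential G u Z (k + 1) h := by
  by_cases h0 : trajProb G A u h = 0
  · simp [h0]
  have hnonneg (Z : Finset V) : 0 ≤ trajProb G A u h * avoidPotential G u Z (k + 1) h :=
    mul_nonneg (trajProb_nonneg h) (avoidPotential_nonneg h)
  obtain ⟨Z, hZF, hZ⟩ := (hF v).exists_avoidPotential_eq_one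
    (isHistory_of_trajProb_ne_zero hA h0) heven hdeg hΔ hlen hv
  calc trajProb G A u h = trajProb G A u h * avoidPotential G u Z (k + 1) h := by
        rw [hZ, mul_one]
    _ ≤ ∑ Z ∈ F v, trajProb G A u h * avoidPotential G u Z (k + 1) h :=
        Finset.single_le_sum (f := fun Z => trajProb G A u h * avoidPotential G u Z (k + 1) h)
          (fun Z _ => hnonneg Z) hZF
    _ ≤ ∑ v, ∑ Z ∈ F v, trajProb G A u h * avoidPotential G u Z (k + 1) h :=
        Finset.single_le_sum
          (f := fun v => ∑ Z ∈ F v, trajProb G A u h * avoidPotential G u Z (k + 1) h)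
          (fun v _ => Finset.sum_nonneg fun Z _ => hnonneg Z) (Finset.mem_univ v)

theorem uncovProb_le_sum_avoidProb (hA : ValidRule G A) (heven : ∀ a, Even (G.degree a))
    (hdeg : ∀ a, 0 < G.degree a) {Δ : ℕ} (hΔ : ∀ a, G.degree a ≤ Δ)
    {F : V → Finset (Finset V)} (hF : ∀ v, IsTargetFamily G v (F v)) (k : ℕ) :
    uncovProb G A u (Δ * Fintype.card V + 1 + k) ≤ ∑ v, ∑ Z ∈ F v, avoidProb G Z (k + 1) u := by
  calc uncovProb G A u (Δ * Fintype.card V + 1 + k)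
      ≤ ∑ f : Fin (Δ * Fintype.card V + 1 + k + 1) → V, ∑ v, ∑ Z ∈ F v,
          trajProb G A u (List.ofFn f) * avoidPotential G u Z (k + 1) (List.ofFn f) := by
        refine Finset.sum_le_sum fun f _ => ?_
        split_ifs with hcov
        · exact Finset.sum_nonneg fun v _ => Finset.sum_nonneg fun Z _ =>
            mul_nonneg (trajProb_nonneg _) (avoidPotential_nonneg _)
        · obtain ⟨v, hv⟩ := not_forall.1 hcov
          exact trajProb_le_sum_avoidPotential hA heven hdeg hΔ hF List.length_ofFn
            fun hmem => hv (List.mem_ofFn.1 hmem)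
    _ = ∑ v, ∑ Z ∈ F v, ∑ f : Fin (Δ * Fintype.card V + 1 + k + 1) → V,
          trajProb G A u (List.ofFn f) * avoidPotential G u Z (k + 1) (List.ofFn f) := by
        rw [Finset.sum_comm]
        exact Finset.sum_congr rfl fun v _ => Finset.sum_comm
    _ ≤ ∑ v, ∑ Z ∈ F v, avoidProb G Z (k + 1) u :=
        Finset.sum_le_sum fun v _ => Finset.sum_le_sum fun Z _ =>
          sum_trajProb_mul_avoidPotential_le hA heven _

end Supermartingale

section TargetFamilies

variable {V : Type*} {G B : SimpleGraph V} {v : V} {D : Finset (V × V)}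

/-- The vertices with an outgoing dart in `D`. -/
noncomputable def branched (D : Finset (V × V)) : Finset V := D.image Prod.fst

theorem branched_union_product {w : V} {N : Finset V} (hN : N.Nonempty) :
    branched (D ∪ {w} ×ˢ N) = insert w (branched D) := by
  rw [branched, Finset.image_union, Finset.product_image_fst hN, ← branched, Finset.union_comm]
  rfl

variable [Fintype V]

theorem IsEvenAround.adj_of_degree_eq_two (hB : IsEvenAround G v B) (hdeg : ∀ x, 0 < G.degree x)
    {a b : V} (hva : B.Reachable v a) (ha : G.degree a = 2) (hab : G.Adj a b) : B.Adj a b := by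
  obtain ⟨c, hc⟩ := hB.exists_adj hdeg hva
  have hsub : B.neighborFinset a ⊆ G.neighborFinset a := fun w hw => by
    simpa using hB.le (by simpa using hw)
  have hpos : 0 < B.degree a := (B.degree_pos_iff_exists_adj a).2 ⟨c, hc⟩
  have hle : G.degree a ≤ B.degree a := by
    have := hB.even_degree a
    grind
  have heq := Finset.eq_of_subset_of_card_le hsub (by simpa using hle)
  rwa [← SimpleGraph.mem_neighborFinset, heq, SimpleGraph.mem_neighborFinset]

theorem IsEvenAround.le_card_reachable {ℓ : ℕ} (hB : IsEvenAround G v B)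
    (hgood : EvenSubgraphGood G ℓ) : ℓ ≤ (Finset.univ.filter fun z => B.Reachable v z).card := by
  obtain ⟨C, hC⟩ : ∃ C : SimpleGraph V, ∀ a b, C.Adj a b ↔ B.Adj a b ∧ B.Reachable v a :=
    ⟨{ Adj := fun a b => B.Adj a b ∧ B.Reachable v a
       symm := ⟨fun _ _ h => ⟨h.1.symm, h.2.trans h.1.reachable⟩⟩
       loopless := ⟨fun _ h => h.1.ne rfl⟩ }, fun _ _ => Iff.rfl⟩
  refine le_card_of_even_degree hgood (H := C) (fun a b h => hB.le ((hC a b).1 h).1) (fun a => ?_)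
    (fun y hy => (hC v y).2 ⟨hB.adj y hy, .rfl⟩) (by simp)
    fun a b h => by simpa using ((hC a b).1 h).2
  rw [← degreeParity_eq_zero_iff, degreeParity_eq_sum]
  by_cases ha : B.Reachable v a
  · have := degreeParity_eq_zero_iff.2 (hB.even_degree a)
    simpa [degreeParity_eq_sum, hC, ha] using this
  · simp [hC, ha]

/-- The vertices reached from `v` by leaving a vertex of degree 2 along any edge, and any other
vertex along a dart of `D`. -/
noncomputable def explored (G : SimpleGraph V) (v : V) (D : Finset (V × V)) : Finset V :=
  Finset.univ.filter fun z =>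
    Relation.ReflTransGen (fun a b => G.Adj a b ∧ (G.degree a = 2 ∨ (a, b) ∈ D)) v z

/-- The explored vertices of degree other than 2 that have not been branched at. -/
noncomputable def branchFrontier (G : SimpleGraph V) (v : V) (D : Finset (V × V)) :
    Finset V :=
  (explored G v D).filter fun w => G.degree w ≠ 2 ∧ w ∉ branched D

theorem explored_mono {D' : Finset (V × V)} (h : D ⊆ D') : explored G v D ⊆ explored G v D' := by
  intro z hz
  simp only [explored, Finset.mem_filter_univ] at hz ⊢
  exact Relation.ReflTransGen.mono (fun a b hab => ⟨hab.1, hab.2.imp_right (h ·)⟩) _ _ hz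

theorem IsEvenAround.reachable_of_mem_explored (hB : IsEvenAround G v B)
    (hdeg : ∀ x, 0 < G.degree x) (hD : ∀ a b, (a, b) ∈ D → B.Adj a b) {z : V}
    (hz : z ∈ explored G v D) : B.Reachable v z := by
  simp only [explored, Finset.mem_filter_univ] at hz
  induction hz with
  | refl => exact .rfl
  | tail _ hstep ih =>
    have hadj := hstep.2.elim (fun h2 => hB.adj_of_degree_eq_two hdeg ih h2 hstep.1) (hD _ _)
    exact ih.trans hadj.reachable

/-- The darts `D` are those of `B` at the vertices branched at so far while exploring the component
of `v` in `B`. -/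
structure IsExploration (G : SimpleGraph V) (v : V) (B : SimpleGraph V) (D : Finset (V × V)) :
    Prop where
  mem_iff : ∀ a b, (a, b) ∈ D ↔ a ∈ branched D ∧ B.Adj a b
  branched_subset : branched D ⊆ explored G v D
  three_le_degree : ∀ w ∈ branched D, 3 ≤ G.degree w

theorem IsExploration.mem_explored_of_reachable (hD : IsExploration G v B D) (hB : B ≤ G)
    (hfront : branchFrontier G v D = ∅) {z : V} (hz : B.Reachable v z) : z ∈ explored G v D := by
  rw [SimpleGraph.reachable_iff_reflTransGen] at hz
  induction hz with
  | refl => simp [explored, Relation.ReflTransGen.refl]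
  | @tail b c _ hbc ih =>
    have hb : G.degree b = 2 ∨ b ∈ branched D := by
      by_contra! hb
      exact Finset.eq_empty_iff_forall_notMem.1 hfront b (Finset.mem_filter.2 ⟨ih, hb⟩)
    simp only [explored, Finset.mem_filter_univ] at ih ⊢
    exact ih.tail ⟨hB hbc, hb.imp_right fun hb => (hD.mem_iff b c).2 ⟨hb, hbc⟩⟩

/-- All candidates for one more exploration step: a vertex `w` of the frontier is fixed, and any
set of neighbours of `w` may serve as its neighbourhood. -/
noncomputable def extensions (G : SimpleGraph V) (v : V) (D : Finset (V × V)) :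
    Finset (Finset (V × V)) :=
  if h : (branchFrontier G v D).Nonempty then
    (G.neighborFinset h.choose).powerset.image fun N => D ∪ {h.choose} ×ˢ N
  else {D}

theorem card_extensions_le {Δ : ℕ} (hΔ : ∀ x, G.degree x ≤ Δ) (D : Finset (V × V)) :
    (extensions G v D).card ≤ 2 ^ Δ := by
  rw [extensions]
  split_ifs
  · refine Finset.card_image_le.trans ?_
    rw [Finset.card_powerset, G.card_neighborFinset_eq_degree]
    exact Nat.pow_le_pow_right two_pos (hΔ _)
  · simpa using Nat.one_le_two_pow

/-- The candidates for the darts found in `k` exploration steps from `v`. -/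
noncomputable def explorations (G : SimpleGraph V) (v : V) : ℕ → Finset (Finset (V × V))
  | 0 => {∅}
  | k + 1 => (explorations G v k).biUnion (extensions G v)

theorem card_explorations_le {Δ : ℕ} (hΔ : ∀ x, G.degree x ≤ Δ) (k : ℕ) :
    (explorations G v k).card ≤ 2 ^ (Δ * k) := by
  induction k with
  | zero => simp [explorations]
  | succ k ih =>
    calc (explorations G v (k + 1)).card ≤ (explorations G v k).card * 2 ^ Δ :=
          Finset.card_biUnion_le_card_mul _ _ _ fun D _ => card_extensions_le hΔ D
      _ ≤ 2 ^ (Δ * k) * 2 ^ Δ := Nat.mul_le_mul_right _ ih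
      _ = 2 ^ (Δ * (k + 1)) := by ring

theorem IsExploration.union_product (hD : IsExploration G v B D) {w : V} (hw : w ∈ explored G v D)
    (hw3 : 3 ≤ G.degree w) (hwB : ∃ b, B.Adj w b) :
    IsExploration G v B (D ∪ {w} ×ˢ B.neighborFinset w) := by
  obtain ⟨b, hb⟩ := hwB
  have hbranched := branched_union_product (D := D) (w := w) (N := B.neighborFinset w)
    ⟨b, by simpa using hb⟩
  have hmono := explored_mono (G := G) (v := v)
    (Finset.subset_union_left (s₁ := D) (s₂ := {w} ×ˢ B.neighborFinset w))
  refine ⟨fun a b => ?_, ?_, ?_⟩ <;> rw [hbranched]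
  · simp only [Finset.mem_union, Finset.mem_product, Finset.mem_singleton,
      SimpleGraph.mem_neighborFinset, hD.mem_iff a b, Finset.mem_insert]
    grind
  · exact Finset.insert_subset (hmono hw) (hD.branched_subset.trans hmono)
  · exact (Finset.forall_mem_insert _ _ _).2 ⟨hw3, hD.three_le_degree⟩

theorem IsEvenAround.exists_isExploration (hB : IsEvenAround G v B)
    (hdeg : ∀ x, 0 < G.degree x) (heven : ∀ x, Even (G.degree x)) (k : ℕ) :
    ∃ D ∈ explorations G v k, IsExploration G v B D ∧
      ((branched D).card = k ∨ branchFrontier G v D = ∅) := by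
  induction k with
  | zero => exact ⟨∅, by simp [explorations], ⟨by simp [branched], by simp [branched],
      by simp [branched]⟩, by simp [branched]⟩
  | succ k ih =>
    obtain ⟨D, hDk, hD, hcard⟩ := ih
    by_cases hfront : (branchFrontier G v D).Nonempty
    · obtain ⟨hw, hw2, hwD⟩ := Finset.mem_filter.1 hfront.choose_spec
      have hext : D ∪ {hfront.choose} ×ˢ B.neighborFinset hfront.choose ∈ extensions G v D := by
        rw [extensions, dif_pos hfront]
        refine Finset.mem_image_of_mem _ (Finset.mem_powerset.2 fun b hb => ?_)
        simpa using hB.le (by simpa using hb)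
      generalize hfront.choose = w at hw hw2 hwD hext
      have hw3 : 3 ≤ G.degree w := by
        have hpos := hdeg w
        obtain ⟨r, hr⟩ := heven w
        lia
      have hwB := hB.exists_adj hdeg
        (hB.reachable_of_mem_explored hdeg (fun a b h => ((hD.mem_iff a b).1 h).2) hw)
      refine ⟨_, Finset.mem_biUnion.2 ⟨D, hDk, hext⟩, hD.union_product hw hw3 hwB, .inl ?_⟩
      rw [branched_union_product (hwB.imp fun b hb => by simpa using hb),
        Finset.card_insert_of_notMem hwD, hcard.resolve_right hfront.ne_empty]
    · refine ⟨D, Finset.mem_biUnion.2 ⟨D, hDk, ?_⟩, hD,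
        .inr (Finset.not_nonempty_iff_eq_empty.1 hfront)⟩
      simp [extensions, hfront]

theorem IsExploration.isLargeTarget_explored {ℓ j : ℕ} (hD : IsExploration G v B D)
    (hB : IsEvenAround G v B) (hgood : EvenSubgraphGood G ℓ)
    (hj : (branched D).card = j ∨ branchFrontier G v D = ∅) :
    IsLargeTarget G ℓ j (explored G v D) := by
  rcases hj with hj | hfront
  · right
    rw [← hj]
    exact Finset.card_le_card fun w hw =>
      Finset.mem_filter.2 ⟨hD.branched_subset hw, hD.three_le_degree w hw⟩
  · left
    exact (hB.le_card_reachable hgood).trans (Finset.card_le_card fun z hz =>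
      hD.mem_explored_of_reachable hB.le hfront (by simpa using hz))

theorem EvenSubgraphGood.exists_isTargetFamily {ℓ Δ : ℕ} (hgood : EvenSubgraphGood G ℓ)
    (hdeg : ∀ x, 0 < G.degree x) (heven : ∀ x, Even (G.degree x)) (hΔ : ∀ x, G.degree x ≤ Δ)
    (j : ℕ) (v : V) :
    ∃ F : Finset (Finset V), F.card ≤ 2 ^ (Δ * j) ∧ (∀ Z ∈ F, IsLargeTarget G ℓ j Z) ∧
      IsTargetFamily G v F := by
  refine ⟨((explorations G v j).image (explored G v)).filter (IsLargeTarget G ℓ j),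
    ((Finset.card_filter_le _ _).trans Finset.card_image_le).trans (card_explorations_le hΔ j),
    fun Z hZ => (Finset.mem_filter.1 hZ).2, fun B hB => ?_⟩
  obtain ⟨D, hDj, hD, hj⟩ := hB.exists_isExploration hdeg heven j
  refine ⟨explored G v D, Finset.mem_filter.2 ⟨Finset.mem_image_of_mem _ hDj,
    hD.isLargeTarget_explored hB hgood hj⟩, fun z hz => ?_⟩
  exact hB.reachable_of_mem_explored hdeg (fun a b h => ((hD.mem_iff a b).1 h).2) hz

end TargetFamilies

section CoverTime

theorem tsum_ofReal_le_of_geometric_tail {f : ℕ → ℝ} {N : ℕ} {r : ℝ} (hr0 : 0 ≤ r) (hr1 : r < 1)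
    (hf : ∀ t, f t ≤ 1) (htail : ∀ k, f (N + k) ≤ r ^ k) :
    ∑' t, ENNReal.ofReal (f t) ≤ ENNReal.ofReal (N + (1 - r)⁻¹) := by
  have hhead : ∑ t ∈ Finset.range N, ENNReal.ofReal (f t) ≤ ENNReal.ofReal N := by
    calc ∑ t ∈ Finset.range N, ENNReal.ofReal (f t)
        ≤ ∑ t ∈ Finset.range N, 1 :=
          Finset.sum_le_sum fun t _ => ENNReal.ofReal_le_one.2 (hf t)
      _ = ENNReal.ofReal N := by simp
  have hrest : ∑' k, ENNReal.ofReal (f (k + N)) ≤ ENNReal.ofReal (1 - r)⁻¹ := by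
    calc ∑' k, ENNReal.ofReal (f (k + N))
        ≤ ∑' k, ENNReal.ofReal (r ^ k) :=
          ENNReal.tsum_le_tsum fun k => ENNReal.ofReal_le_ofReal (add_comm N k ▸ htail k)
      _ = ENNReal.ofReal (1 - r)⁻¹ := by
          rw [← ENNReal.ofReal_tsum_of_nonneg (fun k => pow_nonneg hr0 k)
            (summable_geometric_of_lt_one hr0 hr1), tsum_geometric_of_lt_one hr0 hr1]
  rw [← Summable.sum_add_tsum_nat_add' (f := fun t => ENNReal.ofReal (f t)) (k := N)
    ENNReal.summable, ENNReal.ofReal_add N.cast_nonneg (inv_nonneg.2 (sub_nonneg.2 hr1.le))]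
  exact add_le_add hhead hrest

theorem two_pow_le_exp {x : ℝ} {k : ℕ} (hk : k ≤ x) : (2 : ℝ) ^ k ≤ Real.exp x := by
  calc (2 : ℝ) ^ k ≤ Real.exp 1 ^ k :=
        pow_le_pow_left₀ zero_le_two (by linarith [Real.add_one_le_exp (1 : ℝ)]) k
    _ = Real.exp k := by rw [← Real.exp_nat_mul, mul_one]
    _ ≤ Real.exp x := Real.exp_le_exp.2 hk

theorem one_sub_pow_le_exp_neg {x γ : ℝ} {T : ℕ} (hγ0 : 0 < γ) (hγ1 : γ ≤ 1) (hT : x / γ ≤ T) :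
    (1 - γ) ^ T ≤ Real.exp (-x) := by
  calc (1 - γ) ^ T ≤ Real.exp (-γ) ^ T :=
        pow_le_pow_left₀ (sub_nonneg.2 hγ1) (Real.one_sub_le_exp_neg γ) T
    _ = Real.exp (T * -γ) := (Real.exp_nat_mul _ _).symm
    _ ≤ Real.exp (-x) := Real.exp_le_exp.2 (by linarith [(div_le_iff₀ hγ0).1 hT])

theorem union_bound_le_pow {n γ : ℝ} {Δ j T : ℕ} (hlog : 1 ≤ Real.log n) (hn : 0 < n)
    (hj : j ≤ 2 * Real.log n) (hγ0 : 0 < γ) (hγ1 : γ ≤ 1)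
    (hT : (2 + 3 * Δ) * Real.log n / γ ≤ T) (k : ℕ) :
    n * (2 ^ (Δ * j) * ((1 - γ) ^ (T + k) * (Δ * n))) ≤ (1 - γ) ^ k := by
  obtain ⟨L, rfl⟩ : ∃ L, n = Real.exp L := ⟨_, (Real.exp_log hn).symm⟩
  rw [Real.log_exp] at hlog hj hT
  have htwo : (2 : ℝ) ^ (Δ * j) ≤ Real.exp (2 * Δ * L) :=
    two_pow_le_exp (by push_cast; nlinarith [Δ.cast_nonneg (α := ℝ)])
  have hΔ : (Δ : ℝ) ≤ Real.exp (Δ * L) := by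
    nlinarith [Real.add_one_le_exp (Δ * L), Δ.cast_nonneg (α := ℝ)]
  have hdecay := one_sub_pow_le_exp_neg hγ0 hγ1 hT
  have : 0 ≤ 1 - γ := sub_nonneg.2 hγ1
  calc Real.exp L * (2 ^ (Δ * j) * ((1 - γ) ^ (T + k) * (Δ * Real.exp L)))
      = Real.exp L * Real.exp L * (2 ^ (Δ * j) * Δ * (1 - γ) ^ T) * (1 - γ) ^ k := by ring
    _ ≤ Real.exp L * Real.exp L * (Real.exp (2 * Δ * L) * Real.exp (Δ * L) *
          Real.exp (-((2 + 3 * Δ) * L))) * (1 - γ) ^ k := by gcongr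
    _ = (1 - γ) ^ k := by
        simp only [← Real.exp_add]
        ring_nf
        simp

/-- The constant of the cover time bound, for graphs of maximum degree at most `Δ`. -/
noncomputable def coverConst (Δ : ℕ) : ℝ := Δ + 2 + (3 + 3 * Δ) * (2 * targetConst Δ)

theorem coverConst_pos (Δ : ℕ) : 0 < coverConst Δ := by
  have := one_le_targetConst Δ
  unfold coverConst
  positivity

theorem add_inv_hittingRate_le {Δ ℓ n : ℕ} {δ T : ℝ} (hδ : 0 < δ) (hlog : 1 ≤ Real.log n)
    (hT : T ≤ (2 + 3 * Δ) * Real.log n / hittingRate Δ δ ℓ n + 1) :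
    Δ * n + 1 + T + (hittingRate Δ δ ℓ n)⁻¹ ≤
      coverConst Δ * (n + n * Real.log n / (ℓ * δ)) := by
  have hK := one_le_targetConst Δ
  have hn : (1 : ℝ) ≤ n := Nat.one_le_cast.2 <| Nat.pos_of_ne_zero fun h => by
    norm_num [h] at hlog
  set q := (n : ℝ) / (ℓ * δ) with hq
  have hq0 : 0 ≤ q := by positivity
  have hinv : (hittingRate Δ δ ℓ n)⁻¹ = 2 * targetConst Δ * q := by
    rw [hittingRate, inv_div, hq]
    ring
  rw [div_eq_mul_inv, hinv] at hT
  rw [hinv, mul_div_right_comm, ← hq]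
  have hKq : 2 * targetConst Δ * q ≤ 2 * targetConst Δ * q * Real.log n :=
    le_mul_of_one_le_right (by positivity) hlog
  have hqL : 0 ≤ (Δ + 2 : ℝ) * (q * Real.log n) := by positivity
  have hKn : 0 ≤ (3 + 3 * (Δ : ℝ)) * (2 * targetConst Δ) * n := by positivity
  calc Δ * n + 1 + T + 2 * targetConst Δ * q
      ≤ (Δ + 2) * n + (3 + 3 * Δ) * (2 * targetConst Δ) * (q * Real.log n) := by linarith
    _ ≤ coverConst Δ * (n + q * Real.log n) := by
        unfold coverConst
        linarith

variable {V : Type*} [Fintype V] {G : SimpleGraph V} {A : List V → V} {u : V} {Δ ℓ : ℕ} {δ : ℝ}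

theorem ecoverTime_eq_zero_of_subsingleton [Subsingleton V] : ecoverTime G A u = 0 := by
  simp [ecoverTime, uncovProb_eq_zero_of_subsingleton]

theorem three_le_card_of_even_degree (hdeg : ∀ x, 0 < G.degree x)
    (heven : ∀ x, Even (G.degree x)) (u : V) : 3 ≤ Fintype.card V := by
  have hlt := G.degree_lt_card_verts u
  have hpos := hdeg u
  obtain ⟨r, hr⟩ := heven u
  lia

theorem one_le_log_of_three_le {n : ℕ} (hn : 3 ≤ n) : 1 ≤ Real.log n := by
  have hn' : (3 : ℝ) ≤ n := by exact_mod_cast hn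
  rw [Real.le_log_iff_exp_le (by linarith)]
  linarith [Real.exp_one_lt_d9]

theorem IsSpectralGap.uncovProb_tail_le (hgap : IsSpectralGap G δ) (hG : G.Connected)
    (hdeg : ∀ x, 0 < G.degree x) (heven : ∀ x, Even (G.degree x)) (hΔ : ∀ x, G.degree x ≤ Δ)
    (hgood : EvenSubgraphGood G ℓ) (hℓ : 0 < ℓ) (hA : ValidRule G A) {T : ℕ}
    (hT : (2 + 3 * Δ) * Real.log (Fintype.card V) / hittingRate Δ δ ℓ (Fintype.card V) ≤ T)
    (k : ℕ) :
    uncovProb G A u (Δ * Fintype.card V + 1 + T + k) ≤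
      (1 - hittingRate Δ δ ℓ (Fintype.card V)) ^ k := by
  have : Nonempty V := ⟨u⟩
  set n := Fintype.card V with hn
  set γ := hittingRate Δ δ ℓ n
  have hn3 : 3 ≤ n := three_le_card_of_even_degree hdeg heven u
  have hlog := one_le_log_of_three_le hn3
  have hγ0 : 0 < γ := hittingRate_pos hgap.pos hℓ (by lia)
  have hγ1 : γ ≤ 1 / 2 := hittingRate_le_half hgap.le_one (hgood.le_card heven)
  have hj : (⌈Real.log n⌉₊ : ℝ) ≤ 2 * Real.log n := by
    linarith [Nat.ceil_lt_add_one (a := Real.log n) (by linarith)]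
  choose F hFcard hFlarge hF using hgood.exists_isTargetFamily hdeg heven hΔ ⌈Real.log n⌉₊
  have havoid : ∀ v, ∀ Z ∈ F v, avoidProb G Z (T + k + 1) u ≤ (1 - γ) ^ (T + k) * (Δ * n) :=
    fun v Z hZ => (hgap.hasDirichletGap hG hdeg hgood hℓ heven hΔ hlog (Nat.le_ceil _)
      (hFlarge v Z hZ)).avoidProb_le (by linarith) hdeg hΔ (T + k) u
  have hpow : 0 ≤ (1 - γ) ^ (T + k) * (Δ * n) :=
    mul_nonneg (pow_nonneg (by linarith) _) (by positivity)
  calc uncovProb G A u (Δ * n + 1 + T + k)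
      ≤ ∑ v, ∑ Z ∈ F v, avoidProb G Z (T + k + 1) u := by
        rw [add_assoc _ T]
        exact uncovProb_le_sum_avoidProb hA heven hdeg hΔ hF (T + k)
    _ ≤ ∑ _v : V, 2 ^ (Δ * ⌈Real.log n⌉₊) * ((1 - γ) ^ (T + k) * (Δ * n)) := by
        refine Finset.sum_le_sum fun v _ => (Finset.sum_le_card_nsmul _ _ _ (havoid v)).trans ?_
        rw [nsmul_eq_mul]
        exact mul_le_mul_of_nonneg_right (by exact_mod_cast hFcard v) hpow
    _ = n * (2 ^ (Δ * ⌈Real.log n⌉₊) * ((1 - γ) ^ (T + k) * (Δ * n))) := by simp [hn]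
    _ ≤ (1 - γ) ^ k :=
        union_bound_le_pow hlog (by positivity) hj hγ0 (by linarith) hT k

theorem IsSpectralGap.ecoverTime_le (hgap : IsSpectralGap G δ) (hG : G.Connected)
    (hdeg : ∀ x, 0 < G.degree x) (heven : ∀ x, Even (G.degree x)) (hΔ : ∀ x, G.degree x ≤ Δ)
    (hgood : EvenSubgraphGood G ℓ) (hℓ : 0 < ℓ) (hA : ValidRule G A) :
    ecoverTime G A u ≤ ENNReal.ofReal (coverConst Δ *
      (Fintype.card V + Fintype.card V * Real.log (Fintype.card V) / (ℓ * δ))) := by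
  have : Nonempty V := ⟨u⟩
  have hn3 := three_le_card_of_even_degree hdeg heven u
  have hlog := one_le_log_of_three_le hn3
  have hγ0 := hittingRate_pos (Δ := Δ) hgap.pos hℓ (n := Fintype.card V) (by lia)
  have hγ1 := hittingRate_le_half (Δ := Δ) hgap.le_one (hgood.le_card heven)
  set x := (2 + 3 * Δ) * Real.log (Fintype.card V) / hittingRate Δ δ ℓ (Fintype.card V)
  have hx : ⌈x⌉₊ ≤ x + 1 := (Nat.ceil_lt_add_one (by positivity)).le
  refine (tsum_ofReal_le_of_geometric_tail (by linarith) (by linarith) uncovProb_le_one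
    (hgap.uncovProb_tail_le hG hdeg heven hΔ hgood hℓ hA (Nat.le_ceil x))).trans
    (ENNReal.ofReal_le_ofReal ?_)
  push_cast
  rw [sub_sub_cancel]
  exact add_inv_hittingRate_le hgap.pos hlog hx

end CoverTime

/-- For every degree bound `Δ` there is a constant `B > 0` such that: for
every connected graph `G` on `n` vertices with all degrees even, maximum degree at most `Δ`,
which is `ℓ`-good, every valid rule `A` and every start vertex, the vertex cover time of the
E-process on `G` is at most `B·(n + n·log n/(ℓ·(1 − λmax)))`. -/
theorem stmt0 (Δ : ℕ) :
    ∃ B : ℝ, 0 < B ∧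
      ∀ (V : Type) [Fintype V] [DecidableEq V] (G : SimpleGraph V) (ℓ : ℕ),
        G.Connected → (∀ x : V, (G.neighborSet x).ncard ≤ Δ) →
        (∀ x : V, Even ((G.neighborSet x).ncard)) → 0 < ℓ → EvenSubgraphGood G ℓ →
        ∀ A : List V → V, ValidRule G A → ∀ u : V,
          ecoverTime G A u ≤
            ENNReal.ofReal (B * ((Fintype.card V : ℝ) +
              (Fintype.card V : ℝ) * Real.log (Fintype.card V) /
                ((ℓ : ℝ) * (1 - lambdaMax (lazyMatrix G))))) := by
  refine ⟨coverConst Δ, coverConst_pos Δ, fun V _ _ G ℓ hG hΔ heven hℓ hgood A hA u => ?_⟩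
  simp only [ncard_neighborSet] at hΔ heven
  rcases subsingleton_or_nontrivial V with hsub | hnontriv
  · exact ecoverTime_eq_zero_of_subsingleton.trans_le zero_le
  · have hdeg : ∀ x, 0 < G.degree x := fun x =>
      (G.degree_pos_iff_exists_adj x).2 (hG.preconnected.exists_adj_of_nontrivial x)
    exact (isSpectralGap_one_sub_lambdaMax hG hdeg).ecoverTime_le hG hdeg heven hΔ hgood hℓ hA
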